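/- (Termination and Deadlock Freedom) Let R be an SMLL net and M_R its SIAM machine. Every run of M_R (maximal sequence of transitions from the initial state I_R) terminates in a final state, and this final state is unique (the same for all runs). -/

import Mathlib

/-! # SMLL: multiplicative linear logic with synchronization

Formalization of the proof-structures, correctness criterion, reduction and
multi-token machine (SIAM) of Dal Lago, Faggian, Hasuo, Yoshimizu,
"The Geometry of Synchronization". -/

/-- SMLL formulas (in negation normal form):
`A ::= 1 | ⊥ | X | X⊥ | A ⊗ A | A ⅋ A`. -/
inductive Formula : Type
  | one : Formula
  | bot : Formula
  | var : ℕ → Formula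
  | covar : ℕ → Formula
  | tens : Formula → Formula → Formula
  | parr : Formula → Formula → Formula
  deriving DecidableEq

namespace Formula

/-- Linear negation. -/
def dual : Formula → Formula
  | one => bot
  | bot => one
  | var n => covar n
  | covar n => var n
  | tens A B => parr A.dual B.dual
  | parr A B => tens A.dual B.dual

/-- Positive formulas: `P ::= 1 | P ⊗ P`. -/
inductive Positive : Formula → Prop
  | one : Positive one
  | tens {A B : Formula} : Positive A → Positive B → Positive (tens A B)

/-- Negative formulas: `N ::= ⊥ | N ⅋ N`. -/
inductive Negative : Formula → Prop
  | bot : Negative bot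
  | parr {A B : Formula} : Negative A → Negative B → Negative (parr A B)

/-- A formula is polarized when it is positive or negative. -/
def Polarized (A : Formula) : Prop := Positive A ∨ Negative A

/-- Whether `⊥` occurs in a formula. -/
def hasBotB : Formula → Bool
  | one => false
  | bot => true
  | var _ => false
  | covar _ => false
  | tens A B => hasBotB A || hasBotB B
  | parr A B => hasBotB A || hasBotB B

/-- Addresses of occurrences inside a formula: `false` = left, `true` = right. -/
abbrev Addr := List Bool

/-- Subformula at a given address (if the address is meaningful). -/
def sub : Formula → Addr → Option Formula
  | A, [] => some A
  | tens A _, false :: m => sub A m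
  | tens _ B, true :: m => sub B m
  | parr A _, false :: m => sub A m
  | parr _ B, true :: m => sub B m
  | _, _ :: _ => none

def IsAtom : Formula → Prop
  | one => True
  | bot => True
  | var _ => True
  | covar _ => True
  | tens _ _ => False
  | parr _ _ => False

/-- `m` is the address of an occurrence of an atom in `A`. -/
def AtomOcc (A : Formula) (m : Addr) : Prop := ∃ a, sub A m = some a ∧ IsAtom a

/-- The atom occurrence at `m` in `A` is positive (it is `1` or `X`). -/
def PosOcc (A : Formula) (m : Addr) : Prop :=
  ∃ a, sub A m = some a ∧ (a = one ∨ ∃ n, a = var n)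

/-- The atom occurrence at `m` in `A` is negative (it is `⊥` or `X⊥`). -/
def NegOcc (A : Formula) (m : Addr) : Prop :=
  ∃ a, sub A m = some a ∧ (a = bot ∨ ∃ n, a = covar n)

theorem NegOcc.atomOcc {A : Formula} {m : Addr} (h : NegOcc A m) : AtomOcc A m := by
  obtain ⟨a, ha, h⟩ := h
  refine ⟨a, ha, ?_⟩
  rcases h with rfl | ⟨n, rfl⟩ <;> trivial

theorem PosOcc.atomOcc {A : Formula} {m : Addr} (h : PosOcc A m) : AtomOcc A m := by
  obtain ⟨a, ha, h⟩ := h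
  refine ⟨a, ha, ?_⟩
  rcases h with rfl | ⟨n, rfl⟩ <;> trivial

end Formula

/-- The sorts of links of an SMLL structure. -/
inductive LinkSort : Type
  | ax | cut | tens | parr | one | bot | sync
  deriving DecidableEq

/-- An SMLL proof-structure (with boxes): a finite directed multigraph whose
edges are typed by formulas and whose nodes are links.  Every edge is the
conclusion of exactly one link (its `src`); it is the premiss of the link
`tgt`, if any (edges with no target are the conclusions of the structure).
`pIdx` indexes an edge among the premisses of its target (for `⊗`/`⅋`-links:
`0` = left, `1` = right; for sync links it pairs premisses with conclusions);
`cIdx` indexes an edge among the conclusions of its source (for sync links,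
the `i`-th conclusion corresponds to the `i`-th premiss).  Each `bot`-link is
the lock of a box; `box n` is the innermost box containing the node `n` and
`boxes n` is the set of all boxes containing `n`. -/
structure Struct : Type 1 where
  Edge : Type
  Node : Type
  edgeFintype : Fintype Edge
  nodeFintype : Fintype Node
  edgeDecEq : DecidableEq Edge
  nodeDecEq : DecidableEq Node
  typ : Edge → Formula
  sort : Node → LinkSort
  src : Edge → Node
  tgt : Edge → Option Node
  pIdx : Edge → ℕ
  cIdx : Edge → ℕ
  box : Node → Option Node
  boxes : Node → Finset Node

attribute [instance] Struct.edgeFintype Struct.nodeFintype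
attribute [instance] Struct.edgeDecEq Struct.nodeDecEq

namespace Struct

variable (S : Struct)

/-- The conclusions of a link. -/
def concls (n : S.Node) : Finset S.Edge := Finset.univ.filter fun e => S.src e = n

/-- The premisses of a link. -/
def prems (n : S.Node) : Finset S.Edge := Finset.univ.filter fun e => S.tgt e = some n

/-- The conclusions of the structure. -/
def IsConcl (e : S.Edge) : Prop := S.tgt e = none

/-- Well-formedness of an SMLL structure: the constraints that the sort of a
link induces on the number and the types of its premisses and conclusions,
together with the coherence of the nesting of boxes. -/
def WF : Prop :=
  (∀ n, S.sort n = .ax → S.prems n = ∅ ∧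
    ∃ e f, e ≠ f ∧ S.concls n = {e, f} ∧ S.typ f = (S.typ e).dual) ∧
  (∀ n, S.sort n = .cut → S.concls n = ∅ ∧
    ∃ e f, e ≠ f ∧ S.prems n = {e, f} ∧ S.typ f = (S.typ e).dual) ∧
  (∀ n, S.sort n = .tens → ∃ e f g, e ≠ f ∧ S.prems n = {e, f} ∧
    S.pIdx e = 0 ∧ S.pIdx f = 1 ∧ S.concls n = {g} ∧
    S.typ g = .tens (S.typ e) (S.typ f)) ∧
  (∀ n, S.sort n = .parr → ∃ e f g, e ≠ f ∧ S.prems n = {e, f} ∧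
    S.pIdx e = 0 ∧ S.pIdx f = 1 ∧ S.concls n = {g} ∧
    S.typ g = .parr (S.typ e) (S.typ f)) ∧
  (∀ n, S.sort n = .one → S.prems n = ∅ ∧ ∃ e, S.concls n = {e} ∧ S.typ e = .one) ∧
  (∀ n, S.sort n = .bot → S.prems n = ∅ ∧ ∃ e, S.concls n = {e} ∧ S.typ e = .bot) ∧
  (∀ n, S.sort n = .sync →
    (∀ e ∈ S.prems n, (S.typ e).Polarized) ∧
    (∀ e ∈ S.prems n, ∃! f, f ∈ S.concls n ∧ S.cIdx f = S.pIdx e) ∧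
    (∀ f ∈ S.concls n, ∃! e, e ∈ S.prems n ∧ S.pIdx e = S.cIdx f) ∧
    (∀ e ∈ S.prems n, ∀ f ∈ S.concls n, S.cIdx f = S.pIdx e → S.typ f = S.typ e)) ∧
  (∀ n b, b ∈ S.boxes n → S.sort b = .bot) ∧
  (∀ n, S.box n = none → S.boxes n = ∅) ∧
  (∀ n b, S.box n = some b → b ∉ S.boxes b ∧ S.boxes n = insert b (S.boxes b)) ∧
  (∀ e n, S.tgt e = some n → S.boxes n ⊆ S.boxes (S.src e))

/-- `b` is the representative of the node `m` in the level-`ℓ` graph (the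
graph in which each box strictly below level `ℓ` is collapsed to a single
box-node, identified with its `bot`-link).  For `ℓ = none` this is the
`0`-graph. -/
def RepAt (ℓ : Option S.Node) (m b : S.Node) : Prop :=
  (S.box m = ℓ ∧ b = m) ∨ (b ∈ S.boxes m ∧ S.box b = ℓ)

/-- Edge `e` joins the nodes `u` and `v` (undirectedly) in the level-`ℓ` graph. -/
def ConnectsAt (ℓ : Option S.Node) (e : S.Edge) (u v : S.Node) : Prop :=
  ∃ t, S.tgt e = some t ∧ (S.box t = ℓ ∨ S.box (S.src e) = ℓ) ∧
    ((S.RepAt ℓ (S.src e) u ∧ S.RepAt ℓ t v) ∨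
     (S.RepAt ℓ (S.src e) v ∧ S.RepAt ℓ t u))

/-- The out-edges of a sync link are its positive conclusions and its negative
premisses. -/
def OutEdgeOf (l : S.Node) (e : S.Edge) : Prop :=
  S.sort l = .sync ∧
  ((S.src e = l ∧ (S.typ e).Positive) ∨ (S.tgt e = some l ∧ (S.typ e).Negative))

/-- There is a switching cycle in the level-`ℓ` graph: a cyclic undirected
simple path which uses at most one of the two premisses of each `⅋`-link and
at most one out-edge of each sync link. -/
def SwitchingCycleAt (ℓ : Option S.Node) : Prop :=
  ∃ (k : ℕ) (v : Fin (k + 1) → S.Node) (e : Fin (k + 1) → S.Edge),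
    Function.Injective v ∧ Function.Injective e ∧
    (∀ i, S.ConnectsAt ℓ (e i) (v i) (v (i + 1))) ∧
    (∀ p, S.sort p = .parr → Set.Subsingleton {i | S.tgt (e i) = some p}) ∧
    (∀ l, S.sort l = .sync → Set.Subsingleton {i | S.OutEdgeOf l (e i)})

/-- Correctness criterion: no switching cycle in the `0`-graph, and,
recursively, no switching cycle in the graph of the content of any box. -/
def Correct : Prop := ∀ ℓ : Option S.Node, ¬ S.SwitchingCycleAt ℓ

/-- A net is a well-formed correct structure. -/
def IsNet : Prop := S.WF ∧ S.Correct

/-! ## Sync paths and hereditary conclusions -/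

/-- One step of a sync path: entering a sync link on a premiss and coming out
on the corresponding conclusion. -/
def SyncStepE (e f : S.Edge) : Prop :=
  ∃ l, S.sort l = .sync ∧ S.tgt e = some l ∧ S.src f = l ∧ S.cIdx f = S.pIdx e

/-- `e` is a hereditary conclusion of the link `l`: there is a sync path from
a conclusion of `l` to `e`. -/
def HereditaryConcl (l : S.Node) (e : S.Edge) : Prop :=
  ∃ f, S.src f = l ∧ Relation.ReflTransGen S.SyncStepE f e

/-- The edge emerges from a box: its source is a `bot`-link (the edge is the
lock of a box) or lies inside some box. -/
def FromBox (e : S.Edge) : Prop := S.sort (S.src e) = .bot ∨ S.box (S.src e) ≠ none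

/-- `e` is a hereditary conclusion of a box. -/
def HereditaryBoxConcl (e : S.Edge) : Prop :=
  ∃ f, S.FromBox f ∧ Relation.ReflTransGen S.SyncStepE f e

/-- A ready cut: a cut at depth 0 neither of whose premisses is a hereditary
conclusion of a box. -/
def ReadyCut (c : S.Node) : Prop :=
  S.sort c = .cut ∧ S.box c = none ∧ ∀ e ∈ S.prems c, ¬ S.HereditaryBoxConcl e

/-! ## Polarized paths and the order on links -/

/-- A node is polarized when all of its conclusions are polarized. -/
def PolarizedNode (n : S.Node) : Prop := ∀ e ∈ S.concls n, (S.typ e).Polarized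

/-- A single step of a polarized path from link `a` to link `b` along the
polarized edge `e`: downwards on positive edges, upwards on negative edges,
connecting polarized nodes and never entering boxes. -/
def PolStep (e : S.Edge) (a b : S.Node) : Prop :=
  S.box a = none ∧ S.box b = none ∧ S.PolarizedNode a ∧ S.PolarizedNode b ∧
  (((S.typ e).Positive ∧ S.src e = a ∧ S.tgt e = some b) ∨
   ((S.typ e).Negative ∧ S.tgt e = some a ∧ S.src e = b))

/-- `a ≺ b` : there is a (simple) polarized path from `a` to `b`. -/
def prec (a b : S.Node) : Prop :=
  ∃ (k : ℕ) (v : Fin (k + 2) → S.Node) (e : Fin (k + 1) → S.Edge),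
    v 0 = a ∧ v (Fin.last _) = b ∧
    Function.Injective v ∧ Function.Injective e ∧
    ∀ i : Fin (k + 1), S.PolStep (e i) (v i.castSucc) (v i.succ)

/-- SMLL⁰ structures: no unit links (hence no boxes). -/
def UnitFree : Prop := ∀ n : S.Node, S.sort n ≠ .one ∧ S.sort n ≠ .bot

/-- Closed structures: no `⊥` occurs in the conclusions. -/
def Closed : Prop := ∀ e : S.Edge, S.tgt e = none → (S.typ e).hasBotB = false

end Struct

/-! ## Reduction -/

/-- A partial injection `j` whose (some-)range is exactly `X`. -/
def PInjOnto {α β : Type*} (j : α → Option β) (X : Set β) : Prop :=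
  (∀ a a' b, j a = some b → j a' = some b → a = a') ∧
  (∀ a b, j a = some b → b ∈ X) ∧
  (∀ b ∈ X, ∃ a, j a = some b)

/-- `j` is total. -/
def JTotal {α β : Type*} (j : α → Option β) : Prop := ∀ a, j a ≠ none

/-- The structures `Q` and `R` agree, along the correspondences `jN`, `jE`,
on all edges outside `XE` and all nodes outside `XN`. -/
def AgreesOn (Q R : Struct) (jN : Q.Node → Option R.Node)
    (jE : Q.Edge → Option R.Edge) (XE : Set R.Edge) (XN : Set R.Node) : Prop :=
  (∀ x y, jE x = some y → y ∉ XE →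
    Q.typ x = R.typ y ∧ jN (Q.src x) = some (R.src y) ∧
    (Q.tgt x).bind jN = R.tgt y ∧ Q.pIdx x = R.pIdx y ∧ Q.cIdx x = R.cIdx y) ∧
  (∀ n m, jN n = some m → m ∉ XN →
    Q.sort n = R.sort m ∧ (Q.box n).bind jN = R.box m ∧
    (∀ b b', jN b = some b' → (b ∈ Q.boxes n ↔ b' ∈ R.boxes m)))

/-- The `ax/cut` step: a cut between a conclusion `v` of an axiom `a` and the
dual premiss is removed together with the axiom; the remaining conclusion `u`
of the axiom and the remaining premiss `q` of the cut are merged. -/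
def AxCutStep (R Q : Struct) : Prop :=
  ∃ (a c : R.Node) (v u q : R.Edge),
    R.sort a = .ax ∧ R.sort c = .cut ∧ R.box a = none ∧ R.box c = none ∧
    v ≠ u ∧ v ≠ q ∧ u ≠ q ∧
    R.concls a = {v, u} ∧ R.prems c = {v, q} ∧
    ∃ (jN : Q.Node → Option R.Node) (jE : Q.Edge → Option R.Edge),
      JTotal jN ∧ JTotal jE ∧
      PInjOnto jN {n | n ≠ a ∧ n ≠ c} ∧
      PInjOnto jE {x | x ≠ v ∧ x ≠ u} ∧
      AgreesOn Q R jN jE {q} ∅ ∧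
      (∀ x, jE x = some q →
        Q.typ x = R.typ q ∧ jN (Q.src x) = some (R.src q) ∧
        (Q.tgt x).bind jN = R.tgt u ∧ Q.pIdx x = R.pIdx u ∧ Q.cIdx x = R.cIdx q)

/-- The `⊗/⅋` step: a cut between `A ⊗ B` and `A⊥ ⅋ B⊥` is replaced by two
cuts between the respective premisses. -/
def TensParrStep (R Q : Struct) : Prop :=
  ∃ (c t p : R.Node) (s s' a1 a2 b1 b2 : R.Edge),
    R.sort c = .cut ∧ R.sort t = .tens ∧ R.sort p = .parr ∧
    R.box c = none ∧ R.box t = none ∧ R.box p = none ∧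
    s ≠ s' ∧ R.prems c = {s, s'} ∧ R.concls t = {s} ∧ R.concls p = {s'} ∧
    a1 ≠ a2 ∧ R.prems t = {a1, a2} ∧ R.pIdx a1 = 0 ∧ R.pIdx a2 = 1 ∧
    b1 ≠ b2 ∧ R.prems p = {b1, b2} ∧ R.pIdx b1 = 0 ∧ R.pIdx b2 = 1 ∧
    ∃ (jN : Q.Node → Option R.Node) (jE : Q.Edge → Option R.Edge) (c' : Q.Node),
      JTotal jE ∧
      PInjOnto jN {n | n ≠ t ∧ n ≠ p} ∧
      PInjOnto jE {x | x ≠ s ∧ x ≠ s'} ∧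
      jN c' = none ∧ (∀ n, jN n = none → n = c') ∧
      Q.sort c' = .cut ∧ Q.box c' = none ∧ Q.boxes c' = ∅ ∧
      AgreesOn Q R jN jE {a1, a2, b1, b2} ∅ ∧
      (∀ x y, jE x = some y → y = a1 ∨ y = b1 →
        Q.typ x = R.typ y ∧ jN (Q.src x) = some (R.src y) ∧
        (Q.tgt x).bind jN = some c ∧ Q.cIdx x = R.cIdx y) ∧
      (∀ x y, jE x = some y → y = a2 ∨ y = b2 →
        Q.typ x = R.typ y ∧ jN (Q.src x) = some (R.src y) ∧
        Q.tgt x = some c' ∧ Q.cIdx x = R.cIdx y)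

/-- Commutation of a sync link with a `⊗` or `⅋` link: the sync link acting
on the conclusion `z` of the multiplicative link `m` (with corresponding sync
conclusion `w`) is pushed above `m`, now acting on the two premisses `x`, `y`
of `m` via two fresh sync positions (indices `i₁`, `i₂`) with fresh edges
`x'`, `y'`. -/
def SyncMultStep (R Q : Struct) : Prop :=
  ∃ (l m : R.Node) (z w x y : R.Edge) (i₁ i₂ : ℕ),
    R.sort l = .sync ∧ (R.sort m = .tens ∨ R.sort m = .parr) ∧
    R.box l = none ∧ R.box m = none ∧
    R.src z = m ∧ R.tgt z = some l ∧ R.src w = l ∧ R.cIdx w = R.pIdx z ∧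
    x ≠ y ∧ R.prems m = {x, y} ∧ R.pIdx x = 0 ∧ R.pIdx y = 1 ∧
    i₁ ≠ i₂ ∧
    (∀ e, R.tgt e = some l → R.pIdx e ≠ i₁ ∧ R.pIdx e ≠ i₂) ∧
    (∀ e, R.src e = l → R.cIdx e ≠ i₁ ∧ R.cIdx e ≠ i₂) ∧
    ∃ (jN : Q.Node → Option R.Node) (jE : Q.Edge → Option R.Edge)
      (l' m' : Q.Node) (x' y' : Q.Edge),
      JTotal jN ∧ PInjOnto jN Set.univ ∧
      PInjOnto jE {e | e ≠ z} ∧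
      jN l' = some l ∧ jN m' = some m ∧
      x' ≠ y' ∧ jE x' = none ∧ jE y' = none ∧ (∀ e, jE e = none → e = x' ∨ e = y') ∧
      AgreesOn Q R jN jE {x, y, w} ∅ ∧
      (∀ e, jE e = some x →
        Q.typ e = R.typ x ∧ jN (Q.src e) = some (R.src x) ∧
        Q.tgt e = some l' ∧ Q.pIdx e = i₁ ∧ Q.cIdx e = R.cIdx x) ∧
      (∀ e, jE e = some y →
        Q.typ e = R.typ y ∧ jN (Q.src e) = some (R.src y) ∧
        Q.tgt e = some l' ∧ Q.pIdx e = i₂ ∧ Q.cIdx e = R.cIdx y) ∧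
      (∀ e, jE e = some w →
        Q.typ e = R.typ w ∧ Q.src e = m' ∧
        (Q.tgt e).bind jN = R.tgt w ∧ Q.pIdx e = R.pIdx w ∧ Q.cIdx e = R.cIdx w) ∧
      (Q.typ x' = R.typ x ∧ Q.src x' = l' ∧ Q.tgt x' = some m' ∧
        Q.pIdx x' = 0 ∧ Q.cIdx x' = i₁) ∧
      (Q.typ y' = R.typ y ∧ Q.src y' = l' ∧ Q.tgt y' = some m' ∧
        Q.pIdx y' = 1 ∧ Q.cIdx y' = i₂)

/-- Commutation of a sync link with an axiom: a sync link acting on a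
positive conclusion `u` of an axiom (with corresponding conclusion `u'`) is
moved to the axiom's other conclusion `v` (of type `P⊥`), with a fresh sync
position of index `j` and fresh edge `v'`. -/
def SyncAxStep (R Q : Struct) : Prop :=
  ∃ (l a : R.Node) (u u' v : R.Edge) (j : ℕ),
    R.sort l = .sync ∧ R.sort a = .ax ∧ R.box l = none ∧ R.box a = none ∧
    (R.typ u).Positive ∧ u ≠ v ∧ R.concls a = {u, v} ∧
    R.tgt u = some l ∧ R.src u' = l ∧ R.cIdx u' = R.pIdx u ∧ u' ≠ u ∧ u' ≠ v ∧
    (∀ e, R.tgt e = some l → R.pIdx e ≠ j) ∧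
    (∀ e, R.src e = l → R.cIdx e ≠ j) ∧
    ∃ (jN : Q.Node → Option R.Node) (jE : Q.Edge → Option R.Edge)
      (l' a' : Q.Node) (v' : Q.Edge),
      JTotal jN ∧ PInjOnto jN Set.univ ∧ PInjOnto jE {e | e ≠ u} ∧
      jN l' = some l ∧ jN a' = some a ∧
      jE v' = none ∧ (∀ e, jE e = none → e = v') ∧
      AgreesOn Q R jN jE {u', v} ∅ ∧
      (∀ e, jE e = some u' →
        Q.typ e = R.typ u' ∧ Q.src e = a' ∧ Q.cIdx e = R.cIdx u ∧
        (Q.tgt e).bind jN = R.tgt u' ∧ Q.pIdx e = R.pIdx u') ∧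
      (∀ e, jE e = some v →
        Q.typ e = R.typ v ∧ Q.src e = a' ∧ Q.cIdx e = R.cIdx v ∧
        Q.tgt e = some l' ∧ Q.pIdx e = j) ∧
      (Q.typ v' = R.typ v ∧ Q.src v' = l' ∧ Q.cIdx v' = j ∧
        (Q.tgt v').bind jN = R.tgt v ∧ Q.pIdx v' = R.pIdx v)

/-- Commutation of a sync link with a cut: a sync link acting on the premiss
`d'` (of negative type `P⊥`) of a cut is moved to the other premiss `q`. -/
def SyncCutStep (R Q : Struct) : Prop :=
  ∃ (l c : R.Node) (d d' q : R.Edge) (j : ℕ),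
    R.sort l = .sync ∧ R.sort c = .cut ∧ R.box l = none ∧ R.box c = none ∧
    (R.typ d').Negative ∧
    R.src d' = l ∧ R.tgt d' = some c ∧ R.tgt d = some l ∧ R.pIdx d = R.cIdx d' ∧
    d' ≠ q ∧ d ≠ q ∧ d ≠ d' ∧ R.prems c = {d', q} ∧
    (∀ e, R.tgt e = some l → R.pIdx e ≠ j) ∧
    (∀ e, R.src e = l → R.cIdx e ≠ j) ∧
    ∃ (jN : Q.Node → Option R.Node) (jE : Q.Edge → Option R.Edge)
      (l' c' : Q.Node) (q' : Q.Edge),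
      JTotal jN ∧ PInjOnto jN Set.univ ∧ PInjOnto jE {e | e ≠ d'} ∧
      jN l' = some l ∧ jN c' = some c ∧
      jE q' = none ∧ (∀ e, jE e = none → e = q') ∧
      AgreesOn Q R jN jE {d, q} ∅ ∧
      (∀ e, jE e = some d →
        Q.typ e = R.typ d ∧ jN (Q.src e) = some (R.src d) ∧ Q.cIdx e = R.cIdx d ∧
        Q.tgt e = some c' ∧ Q.pIdx e = R.pIdx d') ∧
      (∀ e, jE e = some q →
        Q.typ e = R.typ q ∧ jN (Q.src e) = some (R.src q) ∧ Q.cIdx e = R.cIdx q ∧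
        Q.tgt e = some l' ∧ Q.pIdx e = j) ∧
      (Q.typ q' = R.typ q ∧ Q.src q' = l' ∧ Q.cIdx q' = j ∧
        Q.tgt q' = some c' ∧ Q.pIdx q' = R.pIdx q)

/-- Sync elimination: a sync link all of whose premisses are conclusions of
`one`-links is erased, merging each premiss with its corresponding
conclusion. -/
def SyncElimStep (R Q : Struct) : Prop :=
  ∃ l : R.Node, R.sort l = .sync ∧ R.box l = none ∧
    (∀ e ∈ R.prems l, R.sort (R.src e) = .one) ∧
    ∃ (jN : Q.Node → Option R.Node) (jE : Q.Edge → Option R.Edge),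
      JTotal jN ∧ JTotal jE ∧
      PInjOnto jN {n | n ≠ l} ∧
      PInjOnto jE {e | R.src e ≠ l} ∧
      AgreesOn Q R jN jE {e | R.tgt e = some l} ∅ ∧
      (∀ x e f, jE x = some e → R.tgt e = some l → R.src f = l →
        R.cIdx f = R.pIdx e →
        Q.typ x = R.typ e ∧ jN (Q.src x) = some (R.src e) ∧
        (Q.tgt x).bind jN = R.tgt f ∧ Q.pIdx x = R.pIdx f ∧ Q.cIdx x = R.cIdx e)

/-- The `one/⊥` step (box opening): a cut between the conclusion `o` of a
`one`-link `n₁` and the lock `k` of a box `b` removes the cut, the `one`-link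
and the `bot`-link, and opens the box. -/
def OneBotStep (R Q : Struct) : Prop :=
  ∃ (c n₁ b : R.Node) (o k : R.Edge),
    R.sort c = .cut ∧ R.sort n₁ = .one ∧ R.sort b = .bot ∧
    R.box c = none ∧ R.box n₁ = none ∧ R.box b = none ∧
    o ≠ k ∧ R.prems c = {o, k} ∧ R.src o = n₁ ∧ R.src k = b ∧
    ∃ (jN : Q.Node → Option R.Node) (jE : Q.Edge → Option R.Edge),
      JTotal jN ∧ JTotal jE ∧
      PInjOnto jN {n | n ≠ c ∧ n ≠ n₁ ∧ n ≠ b} ∧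
      PInjOnto jE {e | e ≠ o ∧ e ≠ k} ∧
      (∀ x e, jE x = some e →
        Q.typ x = R.typ e ∧ jN (Q.src x) = some (R.src e) ∧
        (Q.tgt x).bind jN = R.tgt e ∧ Q.pIdx x = R.pIdx e ∧ Q.cIdx x = R.cIdx e) ∧
      (∀ n m, jN n = some m →
        Q.sort n = R.sort m ∧
        (∀ b₀ b₀', jN b₀ = some b₀' → (b₀ ∈ Q.boxes n ↔ b₀' ∈ R.boxes m ∧ b₀' ≠ b)) ∧
        (R.box m = some b → Q.box n = none) ∧
        (R.box m ≠ some b → (Q.box n).bind jN = R.box m))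

/-- The sync-commutation and sync-elimination steps. -/
def SyncRed (R Q : Struct) : Prop :=
  SyncMultStep R Q ∨ SyncAxStep R Q ∨ SyncCutStep R Q ∨ SyncElimStep R Q

/-- The reduction relation `→` on SMLL structures (applied at depth 0 only). -/
def Step (R Q : Struct) : Prop :=
  AxCutStep R Q ∨ TensParrStep R Q ∨ SyncRed R Q ∨ OneBotStep R Q

/-- Isomorphism of structures. -/
def Isom (R Q : Struct) : Prop :=
  ∃ (en : R.Node ≃ Q.Node) (ee : R.Edge ≃ Q.Edge),
    (∀ e, Q.typ (ee e) = R.typ e) ∧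
    (∀ e, Q.src (ee e) = en (R.src e)) ∧
    (∀ e, Q.tgt (ee e) = (R.tgt e).map en) ∧
    (∀ e, Q.pIdx (ee e) = R.pIdx e) ∧
    (∀ e, Q.cIdx (ee e) = R.cIdx e) ∧
    (∀ n, Q.sort (en n) = R.sort n) ∧
    (∀ n, Q.box (en n) = (R.box n).map en) ∧
    (∀ n, Q.boxes (en n) = (R.boxes n).image en)

/-! ## The SIAM: a synchronous interaction abstract machine -/

namespace Struct

variable (S : Struct)

/-- The value of a token: either an occurrence of an atom on an edge, or a
position `(e, i)` on the lock `e` of a box (`BOTBOX`). -/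
inductive PosVal (S : Struct) : Type
  | atom : S.Edge → Formula.Addr → PosVal S
  | lock : S.Edge → ℕ → PosVal S

/-- Initial positions: negative atom occurrences in the conclusions. -/
def InitPos (p : S.Edge × Formula.Addr) : Prop :=
  S.tgt p.1 = none ∧ Formula.NegOcc (S.typ p.1) p.2

/-- Final positions: positive atom occurrences in the conclusions. -/
def FinPos (p : S.Edge × Formula.Addr) : Prop :=
  S.tgt p.1 = none ∧ Formula.PosOcc (S.typ p.1) p.2

/-- One positions: conclusions of `one`-links. -/
def OnePos (p : S.Edge × Formula.Addr) : Prop :=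
  S.sort (S.src p.1) = .one ∧ p.2 = []

/-- Valid token values: genuine atom occurrences, or positions on the lock of
a box. -/
def ValidVal : PosVal S → Prop
  | .atom e m => Formula.AtomOcc (S.typ e) m
  | .lock e _ => S.sort (S.src e) = .bot

end Struct

/-- A state of the SIAM machine `M_S`: a (partial) function from
`INIT(S) ∪ L` (with `L ⊆ ONES(S)`) to the positions of `S`; it records, for
each token, its origin and its current position. -/
structure SState (S : Struct) where
  f : S.Edge × Formula.Addr → Option (Struct.PosVal S)
  dom_subset : ∀ p, f p ≠ none → S.InitPos p ∨ S.OnePos p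
  init_total : ∀ p, S.InitPos p → f p ≠ none
  val_valid : ∀ p v, f p = some v → S.ValidVal v

namespace Struct

variable (S : Struct)

/-- The box `b` is unlocked in state `T`: some token sits on its lock. -/
def Unlocked (T : SState S) (b : S.Node) : Prop :=
  ∃ p e i, T.f p = some (.lock e i) ∧ S.src e = b

/-- A link is active: all the boxes containing it are unlocked. -/
def Active (T : SState S) (n : S.Node) : Prop :=
  ∀ b ∈ S.boxes n, S.Unlocked T b

end Struct

open Classical in
/-- The initial state `I_S`: the identity on the initial positions. -/
noncomputable def initState (S : Struct) : SState S where
  f := fun p => if S.InitPos p then some (.atom p.1 p.2) else none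
  dom_subset := by
    intro p hp
    by_cases h : S.InitPos p
    · exact Or.inl h
    · simp [h] at hp
  init_total := by intro p hp; simp [hp]
  val_valid := by
    intro p v hv
    by_cases h : S.InitPos p
    · simp only [if_pos h, Option.some.injEq] at hv
      subst hv
      exact h.2.atomOcc
    · simp [h] at hv

/-- The transition relation of the SIAM.  Tokens on negative atom occurrences
move upwards, tokens on positive atom occurrences move downwards; all tokens
cross a sync link simultaneously, when each of its in-edges is saturated;
active `one`-links may spawn a token; a token reaching the lock of a box
unlocks it.  Tokens may only cross active links (so they can enter a box only
when it is unlocked). -/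
inductive STrans (S : Struct) : SState S → SState S → Prop
  | axUp {T T' : SState S} {p : S.Edge × Formula.Addr} {e e' : S.Edge}
      {m : Formula.Addr} {a : S.Node} :
      T.f p = some (.atom e m) →
      Formula.NegOcc (S.typ e) m →
      S.src e = a → S.sort a = .ax → S.Active T a →
      S.src e' = a → e' ≠ e →
      (∀ q, q ≠ p → T'.f q = T.f q) →
      T'.f p = some (.atom e' m) →
      STrans S T T'
  | cutDown {T T' : SState S} {p : S.Edge × Formula.Addr} {e e' : S.Edge}
      {m : Formula.Addr} {c : S.Node} :
      T.f p = some (.atom e m) →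
      Formula.PosOcc (S.typ e) m →
      S.tgt e = some c → S.sort c = .cut → S.Active T c →
      S.tgt e' = some c → e' ≠ e →
      (∀ q, q ≠ p → T'.f q = T.f q) →
      T'.f p = some (.atom e' m) →
      STrans S T T'
  | multDown {T T' : SState S} {p : S.Edge × Formula.Addr} {e g : S.Edge}
      {m : Formula.Addr} {n : S.Node} {b : Bool} :
      T.f p = some (.atom e m) →
      Formula.PosOcc (S.typ e) m →
      S.tgt e = some n → (S.sort n = .tens ∨ S.sort n = .parr) → S.Active T n →
      S.src g = n →
      S.pIdx e = (if b then 1 else 0) →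
      (∀ q, q ≠ p → T'.f q = T.f q) →
      T'.f p = some (.atom g (b :: m)) →
      STrans S T T'
  | multUp {T T' : SState S} {p : S.Edge × Formula.Addr} {e g : S.Edge}
      {m : Formula.Addr} {n : S.Node} {b : Bool} :
      T.f p = some (.atom g (b :: m)) →
      Formula.NegOcc (S.typ g) (b :: m) →
      S.src g = n → (S.sort n = .tens ∨ S.sort n = .parr) → S.Active T n →
      S.tgt e = some n →
      S.pIdx e = (if b then 1 else 0) →
      (∀ q, q ≠ p → T'.f q = T.f q) →
      T'.f p = some (.atom e m) →
      STrans S T T'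
  | lockTok {T T' : SState S} {p : S.Edge × Formula.Addr} {e : S.Edge}
      {b' : S.Node} :
      T.f p = some (.atom e []) →
      S.typ e = .bot →
      S.src e = b' → S.sort b' = .bot → S.Active T b' →
      (∀ q, q ≠ p → T'.f q = T.f q) →
      T'.f p = some (.lock e 0) →
      STrans S T T'
  | oneSpawn {T T' : SState S} {n : S.Node} {e : S.Edge} :
      S.sort n = .one → S.Active T n → S.src e = n →
      T.f (e, []) = none →
      (∀ q, q ≠ (e, []) → T'.f q = T.f q) →
      T'.f (e, []) = some (.atom e []) →
      STrans S T T'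
  | syncCross {T T' : SState S} {l : S.Node} :
      S.sort l = .sync → S.Active T l →
      (∃ q e m, T.f q = some (.atom e m) ∧
        ((S.tgt e = some l ∧ (S.typ e).Positive) ∨
         (S.src e = l ∧ (S.typ e).Negative))) →
      (∀ e, ((S.tgt e = some l ∧ (S.typ e).Positive) ∨
             (S.src e = l ∧ (S.typ e).Negative)) →
        ∀ m, Formula.AtomOcc (S.typ e) m → ∃ q, T.f q = some (.atom e m)) →
      (∀ q e m, T.f q = some (.atom e m) → S.tgt e = some l → (S.typ e).Positive →
        ∃ e', S.src e' = l ∧ S.cIdx e' = S.pIdx e ∧ T'.f q = some (.atom e' m)) →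
      (∀ q e m, T.f q = some (.atom e m) → S.src e = l → (S.typ e).Negative →
        ∃ e', S.tgt e' = some l ∧ S.pIdx e' = S.cIdx e ∧ T'.f q = some (.atom e' m)) →
      (∀ q, (∀ e m, T.f q = some (.atom e m) →
          ¬(S.tgt e = some l ∧ (S.typ e).Positive) ∧
          ¬(S.src e = l ∧ (S.typ e).Negative)) →
        T'.f q = T.f q) →
      STrans S T T'

/-- A final state: its image consists of all the final positions together
with positions on the locks of boxes. -/
def SState.Final {S : Struct} (T : SState S) : Prop :=
  (∀ q v, T.f q = some v →
    (∃ e m, v = .atom e m ∧ S.FinPos (e, m)) ∨ (∃ e i, v = .lock e i)) ∧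
  (∀ e m, S.FinPos (e, m) → ∃ q, T.f q = some (.atom e m))

/-- The machine of `S` deadlocks: some maximal transition sequence from the
initial state ends in a non-final state. -/
def Deadlocks (S : Struct) : Prop :=
  ∃ T : SState S, Relation.ReflTransGen (STrans S) (initState S) T ∧
    (∀ T', ¬ STrans S T T') ∧ ¬ T.Final

/-- The machine of `S` is deadlock free: every maximal transition sequence
from the initial state ends in a final state. -/
def DeadlockFree (S : Struct) : Prop :=
  ∀ T : SState S, Relation.ReflTransGen (STrans S) (initState S) T →
    (∀ T', ¬ STrans S T T') → T.Final

/-! ## The closure of a net -/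

/-- A structure with a designated (main) conclusion. -/
structure PNet : Type 1 where
  S : Struct
  main : S.Edge

/-- The net consisting of a single `one`-link. -/
def oneNet : PNet where
  S :=
    { Edge := Unit
      Node := Unit
      edgeFintype := inferInstance
      nodeFintype := inferInstance
      edgeDecEq := inferInstance
      nodeDecEq := inferInstance
      typ := fun _ => .one
      sort := fun _ => .one
      src := fun _ => ()
      tgt := fun _ => none
      pIdx := fun _ => 0
      cIdx := fun _ => 0
      box := fun _ => none
      boxes := fun _ => ∅ }
  main := ()

/-- The net consisting of a single axiom of conclusions `A⊥, A`, with main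
conclusion `A`. -/
def axNet (A : Formula) : PNet where
  S :=
    { Edge := Bool
      Node := Unit
      edgeFintype := inferInstance
      nodeFintype := inferInstance
      edgeDecEq := inferInstance
      nodeDecEq := inferInstance
      typ := fun e => if e then A else A.dual
      sort := fun _ => .ax
      src := fun _ => ()
      tgt := fun _ => none
      pIdx := fun _ => 0
      cIdx := fun e => if e then 1 else 0
      box := fun _ => none
      boxes := fun _ => ∅ }
  main := true

/-- Joining the main conclusions of two nets by a binary link of sort `s`
and conclusion type `C`. -/
def joinNet (s : LinkSort) (C : Formula) (P Q : PNet) : PNet where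
  S :=
    { Edge := Option (P.S.Edge ⊕ Q.S.Edge)
      Node := Option (P.S.Node ⊕ Q.S.Node)
      edgeFintype := inferInstance
      nodeFintype := inferInstance
      edgeDecEq := inferInstance
      nodeDecEq := inferInstance
      typ := fun e =>
        match e with
        | none => C
        | some (.inl x) => P.S.typ x
        | some (.inr y) => Q.S.typ y
      sort := fun n =>
        match n with
        | none => s
        | some (.inl x) => P.S.sort x
        | some (.inr y) => Q.S.sort y
      src := fun e =>
        match e with
        | none => none
        | some (.inl x) => some (.inl (P.S.src x))
        | some (.inr y) => some (.inr (Q.S.src y))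
      tgt := fun e =>
        match e with
        | none => none
        | some (.inl x) =>
            if x = P.main then some none
            else (P.S.tgt x).map fun n => some (.inl n)
        | some (.inr y) =>
            if y = Q.main then some none
            else (Q.S.tgt y).map fun n => some (.inr n)
      pIdx := fun e =>
        match e with
        | none => 0
        | some (.inl x) => if x = P.main then 0 else P.S.pIdx x
        | some (.inr y) => if y = Q.main then 1 else Q.S.pIdx y
      cIdx := fun e =>
        match e with
        | none => 0
        | some (.inl x) => P.S.cIdx x
        | some (.inr y) => Q.S.cIdx y
      box := fun n =>
        match n with
        | none => none
        | some (.inl x) => (P.S.box x).map fun m => some (.inl m)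
        | some (.inr y) => (Q.S.box y).map fun m => some (.inr m)
      boxes := fun n =>
        match n with
        | none => ∅
        | some (.inl x) => (P.S.boxes x).image fun m => some (.inl m)
        | some (.inr y) => (Q.S.boxes y).image fun m => some (.inr m) }
  main := none

/-- The net `R°(A)`, by induction on `A`: it has conclusions `Γ, A` with no
occurrence of `⊥` in `Γ`, and main conclusion `A`. -/
def circNet : Formula → PNet
  | .one => oneNet
  | .bot => axNet .bot
  | .var n => axNet (.var n)
  | .covar n => axNet (.covar n)
  | .tens A B => joinNet .tens (.tens A B) (circNet A) (circNet B)
  | .parr A B => joinNet .parr (.parr A B) (circNet A) (circNet B)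

/-- The conclusions of `R` containing an occurrence of `⊥`. -/
abbrev BadC (R : Struct) :=
  {e : R.Edge // R.tgt e = none ∧ (R.typ e).hasBotB = true}

/-- The closure `R̂` of `R`: each conclusion `A` of `R` containing `⊥` is cut
against the main conclusion of a copy of `R°(A⊥)`. -/
def netClosure (R : Struct) : Struct where
  Edge := R.Edge ⊕ Σ e : BadC R, (circNet (R.typ e.val).dual).S.Edge
  Node := R.Node ⊕ ((Σ e : BadC R, (circNet (R.typ e.val).dual).S.Node) ⊕ BadC R)
  edgeFintype := inferInstance
  nodeFintype := inferInstance
  edgeDecEq := inferInstance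
  nodeDecEq := inferInstance
  typ := fun e =>
    match e with
    | .inl e => R.typ e
    | .inr ⟨b, x⟩ => (circNet (R.typ b.val).dual).S.typ x
  sort := fun n =>
    match n with
    | .inl n => R.sort n
    | .inr (.inl ⟨b, x⟩) => (circNet (R.typ b.val).dual).S.sort x
    | .inr (.inr _) => .cut
  src := fun e =>
    match e with
    | .inl e => .inl (R.src e)
    | .inr ⟨b, x⟩ => .inr (.inl ⟨b, (circNet (R.typ b.val).dual).S.src x⟩)
  tgt := fun e =>
    match e with
    | .inl e =>
        if h : R.tgt e = none ∧ (R.typ e).hasBotB = true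
        then some (.inr (.inr ⟨e, h⟩))
        else (R.tgt e).map Sum.inl
    | .inr ⟨b, x⟩ =>
        if x = (circNet (R.typ b.val).dual).main
        then some (.inr (.inr b))
        else ((circNet (R.typ b.val).dual).S.tgt x).map fun n => .inr (.inl ⟨b, n⟩)
  pIdx := fun e =>
    match e with
    | .inl e => R.pIdx e
    | .inr ⟨b, x⟩ =>
        if x = (circNet (R.typ b.val).dual).main then 1
        else (circNet (R.typ b.val).dual).S.pIdx x
  cIdx := fun e =>
    match e with
    | .inl e => R.cIdx e
    | .inr ⟨b, x⟩ => (circNet (R.typ b.val).dual).S.cIdx x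
  box := fun n =>
    match n with
    | .inl n => (R.box n).map Sum.inl
    | .inr (.inl ⟨b, x⟩) =>
        ((circNet (R.typ b.val).dual).S.box x).map fun m => .inr (.inl ⟨b, m⟩)
    | .inr (.inr _) => none
  boxes := fun n =>
    match n with
    | .inl n => (R.boxes n).image Sum.inl
    | .inr (.inl ⟨b, x⟩) =>
        ((circNet (R.typ b.val).dual).S.boxes x).image fun m => .inr (.inl ⟨b, m⟩)
    | .inr (.inr _) => ∅

/-!
Tokens move along a relation `Flow` on positions which is deterministic in both directions and
cannot return to the origin of a token. Hence every transition enlarges the finite set of visited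
positions, which gives termination. If no transition is possible, let `W` be the set of positions
never visited, and label each edge by a coherence value of the occurrences in `W`: a nonzero label
is handed on from link to link, upwards if it is `-1` and downwards if it is `1`, and never
disappears at an accessible link. If `W` contained an atom occurrence or a lock, this pursuit would
therefore run forever; in a finite structure it repeats itself, and what it traverses at the
outermost depth it visits forever is a switching cycle, against correctness. So all positions have
been visited: each token has been created and sits at the dead end to which `Flow` leads from its
origin, which is a final position or a lock and does not depend on the run.
-/

namespace Formula

theorem IsAtom.cases {a : Formula} (h : a.IsAtom) :
    (a = one ∨ ∃ n, a = var n) ∨ (a = bot ∨ ∃ n, a = covar n) := by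
  cases a <;> simp_all [IsAtom]

theorem atomOcc_iff {A : Formula} {m : Addr} : A.AtomOcc m ↔ A.PosOcc m ∨ A.NegOcc m := by
  refine ⟨fun ⟨a, ha, hatom⟩ => ?_, fun h => h.elim PosOcc.atomOcc NegOcc.atomOcc⟩
  exact hatom.cases.imp (fun h => ⟨a, ha, h⟩) (fun h => ⟨a, ha, h⟩)

theorem PosOcc.not_negOcc {A : Formula} {m : Addr} : A.PosOcc m → ¬ A.NegOcc m := by
  rintro ⟨a, ha, hpos⟩ ⟨b, hb, hneg⟩
  obtain rfl : a = b := Option.some.inj (ha.symm.trans hb)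
  rcases hpos with rfl | ⟨n, rfl⟩ <;> simp at hneg

theorem sub_dual (A : Formula) (m : Addr) : A.dual.sub m = (A.sub m).map dual := by
  induction A generalizing m <;> rcases m with _ | ⟨_ | _, m⟩ <;> simp_all [dual, sub]

theorem dual_dual (A : Formula) : A.dual.dual = A := by
  induction A <;> simp_all [dual]

theorem PosOcc.dual {A : Formula} {m : Addr} : A.PosOcc m → A.dual.NegOcc m := by
  rintro ⟨a, ha, rfl | ⟨n, rfl⟩⟩ <;> exact ⟨_, by rw [sub_dual, ha]; rfl, by simp [Formula.dual]⟩

theorem NegOcc.dual {A : Formula} {m : Addr} : A.NegOcc m → A.dual.PosOcc m := by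
  rintro ⟨a, ha, rfl | ⟨n, rfl⟩⟩ <;> exact ⟨_, by rw [sub_dual, ha]; rfl, by simp [Formula.dual]⟩

theorem Positive.not_negOcc {A : Formula} (h : A.Positive) : ∀ m, ¬ A.NegOcc m := by
  induction h with
  | one => rintro (_ | _) ⟨a, ha, rfl | ⟨n, rfl⟩⟩ <;> simp [sub] at ha
  | tens _ _ ihA ihB =>
    rintro (_ | ⟨_ | _, m⟩) hocc
    · simp [NegOcc, sub] at hocc
    · exact ihA m hocc
    · exact ihB m hocc

theorem Negative.not_posOcc {A : Formula} (h : A.Negative) : ∀ m, ¬ A.PosOcc m := by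
  induction h with
  | bot => rintro (_ | _) ⟨a, ha, rfl | ⟨n, rfl⟩⟩ <;> simp [sub] at ha
  | parr _ _ ihA ihB =>
    rintro (_ | ⟨_ | _, m⟩) hocc
    · simp [PosOcc, sub] at hocc
    · exact ihA m hocc
    · exact ihB m hocc

theorem Positive.posOcc {A : Formula} (h : A.Positive) {m : Addr} (hm : A.AtomOcc m) :
    A.PosOcc m :=
  (atomOcc_iff.1 hm).resolve_right (h.not_negOcc m)

theorem Negative.negOcc {A : Formula} (h : A.Negative) {m : Addr} (hm : A.AtomOcc m) :
    A.NegOcc m :=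
  (atomOcc_iff.1 hm).resolve_left (h.not_posOcc m)

theorem Polarized.positive {A : Formula} (h : A.Polarized) {m : Addr} (hm : A.PosOcc m) :
    A.Positive :=
  h.resolve_right fun hneg => hneg.not_posOcc m hm

theorem Polarized.negative {A : Formula} (h : A.Polarized) {m : Addr} (hm : A.NegOcc m) :
    A.Negative :=
  h.resolve_left fun hpos => hpos.not_negOcc m hm

theorem finite_setOf_atomOcc (A : Formula) : {m | A.AtomOcc m}.Finite := by
  have of_children {C A B : Formula} (hC : ¬ C.IsAtom)
      (hA : {m | A.AtomOcc m}.Finite) (hB : {m | B.AtomOcc m}.Finite)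
      (hl : ∀ m, C.AtomOcc (false :: m) → A.AtomOcc m)
      (hr : ∀ m, C.AtomOcc (true :: m) → B.AtomOcc m) : {m | C.AtomOcc m}.Finite := by
    refine ((hA.image (List.cons false)).union (hB.image (List.cons true))).subset ?_
    rintro (_ | ⟨_ | _, m⟩) hm
    · obtain ⟨a, ha, hatom⟩ := hm
      simp only [sub, Option.some.injEq] at ha
      exact (hC (ha ▸ hatom)).elim
    · exact Or.inl ⟨m, hl m hm, rfl⟩
    · exact Or.inr ⟨m, hr m hm, rfl⟩
  induction A with
  | tens A B ihA ihB | parr A B ihA ihB =>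
    exact of_children (by simp [IsAtom]) ihA ihB (fun _ h => h) (fun _ h => h)
  | _ =>
    refine (Set.finite_singleton []).subset ?_
    rintro (_ | _) ⟨a, ha, _⟩ <;> simp_all [sub]

/-! ### Coherence labels -/

/-- The coherence of a pair of points of `A ⊗ B` in the coherence-space model, computed from the
coherences of its components (`1`: strictly coherent, `0`: equal, `-1`: strictly incoherent). -/
def tensCoh (x y : SignType) : SignType := if x = -1 ∨ y = -1 then -1 else max x y

/-- The coherence of a pair of points of `A ⅋ B`; dual to `tensCoh`. -/
def parrCoh (x y : SignType) : SignType := if x = 1 ∨ y = 1 then 1 else min x y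

open Classical in
/-- The label of a formula `A` whose atom occurrences in `μ` are marked: a marked positive atom is
strictly incoherent, a marked negative one strictly coherent, and an unmarked atom neutral. When
`μ` is the set of positions still waiting for a token, `-1` means that the cause of the wait is to
be sought above the edge and `1` that it is to be sought below. -/
noncomputable def coherence : Formula → (Addr → Prop) → SignType
  | one, μ | var _, μ => if μ [] then -1 else 0
  | bot, μ | covar _, μ => if μ [] then 1 else 0
  | tens A B, μ =>
    tensCoh (A.coherence fun m => μ (false :: m)) (B.coherence fun m => μ (true :: m))
  | parr A B, μ =>
    parrCoh (A.coherence fun m => μ (false :: m)) (B.coherence fun m => μ (true :: m))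

theorem coherence_congr {A : Formula} {μ ν : Addr → Prop} (h : ∀ m, A.AtomOcc m → (μ m ↔ ν m)) :
    A.coherence μ = A.coherence ν := by
  induction A generalizing μ ν with
  | tens A B ihA ihB | parr A B ihA ihB =>
    simp only [coherence]
    rw [ihA fun m hm => h (false :: m) hm, ihB fun m hm => h (true :: m) hm]
  | _ => classical exact if_congr (h [] ⟨_, rfl, trivial⟩) rfl rfl

theorem parrCoh_neg (x y : SignType) : parrCoh (-x) (-y) = -tensCoh x y := by
  revert x y; decide

theorem tensCoh_neg (x y : SignType) : tensCoh (-x) (-y) = -parrCoh x y := by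
  revert x y; decide

theorem coherence_dual (A : Formula) (μ : Addr → Prop) : A.dual.coherence μ = -A.coherence μ := by
  induction A generalizing μ with
  | tens A B ihA ihB => simp only [dual, coherence, ihA, ihB, parrCoh_neg]
  | parr A B ihA ihB => simp only [dual, coherence, ihA, ihB, tensCoh_neg]
  | _ => simp only [dual, coherence]; split <;> rfl

theorem coherence_nonpos {A : Formula} {μ : Addr → Prop} (h : ∀ m, A.NegOcc m → ¬ μ m) :
    A.coherence μ ≤ 0 := by
  have tensCoh_nonpos : ∀ x y : SignType, x ≤ 0 → y ≤ 0 → tensCoh x y ≤ 0 := by decide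
  have parrCoh_nonpos : ∀ x y : SignType, x ≤ 0 → y ≤ 0 → parrCoh x y ≤ 0 := by decide
  induction A generalizing μ with
  | one | var => simp only [coherence]; split <;> decide
  | bot | covar =>
    have hμ : ¬ μ [] := h [] ⟨_, rfl, by simp⟩
    simp [coherence, hμ]
  | tens A B ihA ihB =>
    exact tensCoh_nonpos _ _ (ihA fun m => h (false :: m)) (ihB fun m => h (true :: m))
  | parr A B ihA ihB =>
    exact parrCoh_nonpos _ _ (ihA fun m => h (false :: m)) (ihB fun m => h (true :: m))

theorem coherence_nonneg {A : Formula} {μ : Addr → Prop} (h : ∀ m, A.PosOcc m → ¬ μ m) :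
    0 ≤ A.coherence μ := by
  have hdual : A.dual.coherence μ ≤ 0 :=
    coherence_nonpos fun m hm => h m (A.dual_dual ▸ hm.dual)
  rw [coherence_dual] at hdual
  revert hdual
  cases A.coherence μ <;> decide

theorem coherence_ne_zero {A : Formula} {μ : Addr → Prop} :
    A.coherence μ ≠ 0 ↔ ∃ m, A.AtomOcc m ∧ μ m := by
  refine ⟨fun h => ?_, ?_⟩
  · by_contra! hμ
    exact h (le_antisymm (coherence_nonpos fun m hm => hμ m hm.atomOcc)
      (coherence_nonneg fun m hm => hμ m hm.atomOcc))
  rintro ⟨m, hocc, hm⟩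
  have tensCoh_ne_zero : ∀ x y : SignType, x ≠ 0 ∨ y ≠ 0 → tensCoh x y ≠ 0 := by decide
  have parrCoh_ne_zero : ∀ x y : SignType, x ≠ 0 ∨ y ≠ 0 → parrCoh x y ≠ 0 := by decide
  induction A generalizing μ m with
  | tens A B ihA ihB =>
    rcases m with _ | ⟨_ | _, m⟩
    · simp [AtomOcc, sub, IsAtom] at hocc
    · exact tensCoh_ne_zero _ _ (Or.inl (ihA m hocc hm))
    · exact tensCoh_ne_zero _ _ (Or.inr (ihB m hocc hm))
  | parr A B ihA ihB =>
    rcases m with _ | ⟨_ | _, m⟩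
    · simp [AtomOcc, sub, IsAtom] at hocc
    · exact parrCoh_ne_zero _ _ (Or.inl (ihA m hocc hm))
    · exact parrCoh_ne_zero _ _ (Or.inr (ihB m hocc hm))
  | _ => rcases m with _ | _ <;> simp_all [AtomOcc, sub, coherence]

end Formula

namespace Struct

variable {S : Struct} {n n' b : S.Node} {e e' f g : S.Edge} {m : Formula.Addr}

/-! ### Links of a well-formed structure -/

/-- The incidence data of a multiplicative link `n`: its left premiss `p false`, its right premiss
`p true` and its conclusion `g`. -/
structure IsMultLink (n : S.Node) (p : Bool → S.Edge) (g : S.Edge) : Prop where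
  tgt_iff : ∀ x, S.tgt x = some n ↔ ∃ b, x = p b
  pIdx_eq : ∀ b, S.pIdx (p b) = if b then 1 else 0
  src_iff : ∀ x, S.src x = n ↔ x = g

theorem isMultLink_of_prems_eq {x y : S.Edge} (hprems : S.prems n = {x, y}) (hx : S.pIdx x = 0)
    (hy : S.pIdx y = 1) (hg : S.concls n = {g}) : IsMultLink n (fun b => if b then y else x) g where
  tgt_iff z := by
    have hz : S.tgt z = some n ↔ z = x ∨ z = y := by
      simpa [prems] using Finset.ext_iff.1 hprems z
    simp [hz]
  pIdx_eq := by simp [hx, hy]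
  src_iff z := by simpa [concls] using Finset.ext_iff.1 hg z

namespace WF

theorem exists_ax_conclusion (h : S.WF) (hn : S.sort n = .ax) (he : S.src e = n) :
    ∃ f ≠ e, S.typ f = (S.typ e).dual ∧ ∀ x, S.src x = n ↔ x = e ∨ x = f := by
  obtain ⟨-, a, c, hne, hconcls, htyp⟩ := h.1 n hn
  have hmem (x) : S.src x = n ↔ x = a ∨ x = c := by
    simpa [concls] using Finset.ext_iff.1 hconcls x
  rcases (hmem e).1 he with rfl | rfl
  · exact ⟨c, hne.symm, htyp, hmem⟩
  · exact ⟨a, hne, by rw [htyp, Formula.dual_dual], fun x => (hmem x).trans or_comm⟩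

theorem exists_cut_premiss (h : S.WF) (hn : S.sort n = .cut) (he : S.tgt e = some n) :
    ∃ f ≠ e, S.typ f = (S.typ e).dual ∧ ∀ x, S.tgt x = some n ↔ x = e ∨ x = f := by
  obtain ⟨-, a, c, hne, hprems, htyp⟩ := h.2.1 n hn
  have hmem (x) : S.tgt x = some n ↔ x = a ∨ x = c := by
    simpa [prems] using Finset.ext_iff.1 hprems x
  rcases (hmem e).1 he with rfl | rfl
  · exact ⟨c, hne.symm, htyp, hmem⟩
  · exact ⟨a, hne, by rw [htyp, Formula.dual_dual], fun x => (hmem x).trans or_comm⟩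

theorem exists_isMultLink_tens (h : S.WF) (hn : S.sort n = .tens) :
    ∃ p g, IsMultLink n p g ∧ S.typ g = .tens (S.typ (p false)) (S.typ (p true)) := by
  obtain ⟨x, y, g, -, hprems, hx, hy, hg, htyp⟩ := h.2.2.1 n hn
  exact ⟨_, g, isMultLink_of_prems_eq hprems hx hy hg, by simpa using htyp⟩

theorem exists_isMultLink_parr (h : S.WF) (hn : S.sort n = .parr) :
    ∃ p g, IsMultLink n p g ∧ S.typ g = .parr (S.typ (p false)) (S.typ (p true)) := by
  obtain ⟨x, y, g, -, hprems, hx, hy, hg, htyp⟩ := h.2.2.2.1 n hn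
  exact ⟨_, g, isMultLink_of_prems_eq hprems hx hy hg, by simpa using htyp⟩

theorem exists_isMultLink (h : S.WF) (hn : S.sort n = .tens ∨ S.sort n = .parr) :
    ∃ p g, IsMultLink n p g ∧ ¬ (S.typ g).IsAtom ∧
      ∀ b m, (S.typ g).sub (b :: m) = (S.typ (p b)).sub m := by
  rcases hn with hn | hn
  · obtain ⟨p, g, hlink, htyp⟩ := h.exists_isMultLink_tens hn
    exact ⟨p, g, hlink, by simp [htyp, Formula.IsAtom], by simp [htyp, Formula.sub]⟩
  · obtain ⟨p, g, hlink, htyp⟩ := h.exists_isMultLink_parr hn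
    exact ⟨p, g, hlink, by simp [htyp, Formula.IsAtom], by simp [htyp, Formula.sub]⟩

theorem typ_of_one (h : S.WF) (he : S.sort (S.src e) = .one) : S.typ e = .one := by
  obtain ⟨-, f, hf, htyp⟩ := h.2.2.2.2.1 _ he
  obtain rfl : e = f := by simpa [concls] using (Finset.ext_iff.1 hf e)
  exact htyp

theorem typ_of_bot (h : S.WF) (he : S.sort (S.src e) = .bot) : S.typ e = .bot := by
  obtain ⟨-, f, hf, htyp⟩ := h.2.2.2.2.2.1 _ he
  obtain rfl : e = f := by simpa [concls] using (Finset.ext_iff.1 hf e)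
  exact htyp

theorem exists_lock (h : S.WF) (hb : S.sort b = .bot) : ∃ e, S.src e = b := by
  obtain ⟨-, e, he, -⟩ := h.2.2.2.2.2.1 b hb
  exact ⟨e, by simpa [concls] using Finset.ext_iff.1 he e⟩

theorem existsUnique_sync_conclusion (h : S.WF) (hn : S.sort n = .sync) (he : S.tgt e = some n) :
    ∃! f, S.src f = n ∧ S.cIdx f = S.pIdx e := by
  simpa [concls] using (h.2.2.2.2.2.2.1 n hn).2.1 e (by simpa [prems] using he)

theorem existsUnique_sync_premiss (h : S.WF) (hn : S.sort n = .sync) (hf : S.src f = n) :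
    ∃! e, S.tgt e = some n ∧ S.pIdx e = S.cIdx f := by
  simpa [prems] using (h.2.2.2.2.2.2.1 n hn).2.2.1 f (by simpa [concls] using hf)

theorem polarized_of_sync_premiss (h : S.WF) (hn : S.sort n = .sync) (he : S.tgt e = some n) :
    (S.typ e).Polarized :=
  (h.2.2.2.2.2.2.1 n hn).1 e (by simpa [prems] using he)

theorem typ_sync_conclusion (h : S.WF) (hn : S.sort n = .sync) (he : S.tgt e = some n)
    (hf : S.src f = n) (hidx : S.cIdx f = S.pIdx e) : S.typ f = S.typ e :=
  (h.2.2.2.2.2.2.1 n hn).2.2.2 e (by simpa [prems] using he) f (by simpa [concls] using hf) hidx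

theorem polarized_of_sync_conclusion (h : S.WF) (hn : S.sort n = .sync) (hf : S.src f = n) :
    (S.typ f).Polarized := by
  obtain ⟨e, ⟨he, hidx⟩, -⟩ := h.existsUnique_sync_premiss hn hf
  rw [h.typ_sync_conclusion hn he hf hidx.symm]
  exact h.polarized_of_sync_premiss hn he

theorem sort_src_ne_cut (h : S.WF) (e : S.Edge) : S.sort (S.src e) ≠ .cut := fun hn => by
  simpa [concls] using Finset.ext_iff.1 (h.2.1 _ hn).1 e

theorem sort_tgt (h : S.WF) (he : S.tgt e = some n) :
    S.sort n = .cut ∨ (S.sort n = .tens ∨ S.sort n = .parr) ∨ S.sort n = .sync := by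
  have of_prems_empty (hempty : S.prems n = ∅) : False := by
    simpa [prems, he] using Finset.ext_iff.1 hempty e
  cases hn : S.sort n with
  | ax => exact (of_prems_empty (h.1 n hn).1).elim
  | one => exact (of_prems_empty (h.2.2.2.2.1 n hn).1).elim
  | bot => exact (of_prems_empty (h.2.2.2.2.2.1 n hn).1).elim
  | _ => simp

/-! ### Boxes -/

theorem sort_eq_bot_of_mem_boxes (h : S.WF) (hb : b ∈ S.boxes n) : S.sort b = .bot :=
  h.2.2.2.2.2.2.2.1 n b hb

theorem boxes_eq_empty (h : S.WF) (hn : S.box n = none) : S.boxes n = ∅ :=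
  h.2.2.2.2.2.2.2.2.1 n hn

theorem notMem_boxes_of_box_eq (h : S.WF) (hn : S.box n = some b) : b ∉ S.boxes b :=
  (h.2.2.2.2.2.2.2.2.2.1 n b hn).1

theorem boxes_eq_insert (h : S.WF) (hn : S.box n = some b) : S.boxes n = insert b (S.boxes b) :=
  (h.2.2.2.2.2.2.2.2.2.1 n b hn).2

theorem boxes_tgt_subset (h : S.WF) (he : S.tgt e = some n) : S.boxes n ⊆ S.boxes (S.src e) :=
  h.2.2.2.2.2.2.2.2.2.2 e n he

end WF

end Struct

namespace Struct

/-! ### The flow of tokens through the links -/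

/-- `S.Flow n v w`: crossing the link `n` takes a token from the position `v` to the position `w`,
upwards on negative occurrences and downwards on positive ones. Activity of `n` and the
synchronization of the tokens crossing a sync link are disregarded. -/
inductive Flow (S : Struct) : S.Node → S.PosVal → S.PosVal → Prop
  | ax {n e e' m} : S.sort n = .ax → S.src e = n → S.src e' = n → e' ≠ e →
      (S.typ e).NegOcc m → Flow S n (.atom e m) (.atom e' m)
  | cut {n e e' m} : S.sort n = .cut → S.tgt e = some n → S.tgt e' = some n → e' ≠ e →
      (S.typ e).PosOcc m → Flow S n (.atom e m) (.atom e' m)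
  | multDown {n e g m} {b : Bool} : S.sort n = .tens ∨ S.sort n = .parr → S.tgt e = some n →
      S.src g = n → S.pIdx e = (if b then 1 else 0) → (S.typ e).PosOcc m →
      Flow S n (.atom e m) (.atom g (b :: m))
  | multUp {n e g m} {b : Bool} : S.sort n = .tens ∨ S.sort n = .parr → S.tgt e = some n →
      S.src g = n → S.pIdx e = (if b then 1 else 0) → (S.typ g).NegOcc (b :: m) →
      Flow S n (.atom g (b :: m)) (.atom e m)
  | lock {n e} : S.sort n = .bot → S.src e = n → Flow S n (.atom e []) (.lock e 0)
  | syncDown {n e f m} : S.sort n = .sync → S.tgt e = some n → S.src f = n →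
      S.cIdx f = S.pIdx e → (S.typ e).PosOcc m → Flow S n (.atom e m) (.atom f m)
  | syncUp {n e f m} : S.sort n = .sync → S.tgt e = some n → S.src f = n →
      S.cIdx f = S.pIdx e → (S.typ f).NegOcc m → Flow S n (.atom f m) (.atom e m)

variable {S : Struct} {n n' : S.Node} {v v' w w' : S.PosVal} {e e' f g : S.Edge} {m : Formula.Addr}

/-- A token on the occurrence `m` of the edge `e` is about to enter the link `n`. -/
def Enters (n : S.Node) (e : S.Edge) (m : Formula.Addr) : Prop :=
  S.tgt e = some n ∧ (S.typ e).PosOcc m ∨ S.src e = n ∧ (S.typ e).NegOcc m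

/-- A token on the occurrence `m` of the edge `e` has just left the link `n`. -/
def Leaves (n : S.Node) (e : S.Edge) (m : Formula.Addr) : Prop :=
  S.src e = n ∧ (S.typ e).PosOcc m ∨ S.tgt e = some n ∧ (S.typ e).NegOcc m

theorem Enters.node_unique (h : Enters n e m) (h' : Enters n' e m) : n = n' := by
  rcases h with ⟨h, hp⟩ | ⟨h, hp⟩ <;> rcases h' with ⟨h', hp'⟩ | ⟨h', hp'⟩
  · exact Option.some.inj (h.symm.trans h')
  · exact (hp.not_negOcc hp').elim
  · exact (hp'.not_negOcc hp).elim
  · exact h.symm.trans h'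

theorem Leaves.node_unique (h : Leaves n e m) (h' : Leaves n' e m) : n = n' := by
  rcases h with ⟨h, hp⟩ | ⟨h, hp⟩ <;> rcases h' with ⟨h', hp'⟩ | ⟨h', hp'⟩
  · exact h.symm.trans h'
  · exact (hp.not_negOcc hp').elim
  · exact (hp'.not_negOcc hp).elim
  · exact Option.some.inj (h.symm.trans h')

theorem IsMultLink.eq_prem {p : Bool → S.Edge} (hlink : IsMultLink n p g) {b : Bool}
    (he : S.tgt e = some n) (hidx : S.pIdx e = if b then 1 else 0) : e = p b := by
  obtain ⟨c, rfl⟩ := (hlink.tgt_iff e).1 he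
  rw [hlink.pIdx_eq] at hidx
  cases b <;> cases c <;> simp_all

namespace WF

variable (h : S.WF)
include h

theorem sub_mult {b : Bool} (hn : S.sort n = .tens ∨ S.sort n = .parr) (he : S.tgt e = some n)
    (hg : S.src g = n) (hidx : S.pIdx e = if b then 1 else 0) (m : Formula.Addr) :
    (S.typ g).sub (b :: m) = (S.typ e).sub m := by
  obtain ⟨p, g', hlink, -, hsub⟩ := h.exists_isMultLink hn
  rw [(hlink.src_iff g).1 hg, hlink.eq_prem he hidx, hsub]

theorem posOcc_mult {b : Bool} (hn : S.sort n = .tens ∨ S.sort n = .parr) (he : S.tgt e = some n)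
    (hg : S.src g = n) (hidx : S.pIdx e = if b then 1 else 0) :
    (S.typ g).PosOcc (b :: m) ↔ (S.typ e).PosOcc m := by
  simp only [Formula.PosOcc, h.sub_mult hn he hg hidx]

theorem negOcc_mult {b : Bool} (hn : S.sort n = .tens ∨ S.sort n = .parr) (he : S.tgt e = some n)
    (hg : S.src g = n) (hidx : S.pIdx e = if b then 1 else 0) :
    (S.typ g).NegOcc (b :: m) ↔ (S.typ e).NegOcc m := by
  simp only [Formula.NegOcc, h.sub_mult hn he hg hidx]

theorem typ_ax (hn : S.sort n = .ax) (he : S.src e = n) (hf : S.src f = n) (hne : f ≠ e) :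
    S.typ f = (S.typ e).dual := by
  obtain ⟨f', -, htyp, hall⟩ := h.exists_ax_conclusion hn he
  rwa [((hall f).1 hf).resolve_left hne]

theorem typ_cut (hn : S.sort n = .cut) (he : S.tgt e = some n) (hf : S.tgt f = some n)
    (hne : f ≠ e) : S.typ f = (S.typ e).dual := by
  obtain ⟨f', -, htyp, hall⟩ := h.exists_cut_premiss hn he
  rwa [((hall f).1 hf).resolve_left hne]

theorem enters_of_flow (hvw : S.Flow n v w) : ∃ e m, v = .atom e m ∧ Enters n e m := by
  cases hvw with
  | ax _ he _ _ hm => exact ⟨_, _, rfl, Or.inr ⟨he, hm⟩⟩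
  | cut _ he _ _ hm => exact ⟨_, _, rfl, Or.inl ⟨he, hm⟩⟩
  | multDown _ he _ _ hm => exact ⟨_, _, rfl, Or.inl ⟨he, hm⟩⟩
  | multUp _ _ hg _ hm => exact ⟨_, _, rfl, Or.inr ⟨hg, hm⟩⟩
  | lock hn he =>
    exact ⟨_, _, rfl, Or.inr ⟨he, .bot, by rw [h.typ_of_bot (he ▸ hn)]; rfl, Or.inl rfl⟩⟩
  | syncDown _ he _ _ hm => exact ⟨_, _, rfl, Or.inl ⟨he, hm⟩⟩
  | syncUp _ _ hf _ hm => exact ⟨_, _, rfl, Or.inr ⟨hf, hm⟩⟩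

theorem leaves_of_flow (hvw : S.Flow n v (.atom e m)) : Leaves n e m := by
  cases hvw with
  | ax hn he he' hne hm => exact Or.inl ⟨he', h.typ_ax hn he he' hne ▸ hm.dual⟩
  | cut hn he he' hne hm => exact Or.inr ⟨he', h.typ_cut hn he he' hne ▸ hm.dual⟩
  | multDown hn he hg hidx hm => exact Or.inl ⟨hg, (h.posOcc_mult hn he hg hidx).2 hm⟩
  | multUp hn he hg hidx hm => exact Or.inr ⟨he, (h.negOcc_mult hn he hg hidx).1 hm⟩
  | syncDown hn he hf hidx hm => exact Or.inl ⟨hf, by rwa [h.typ_sync_conclusion hn he hf hidx]⟩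
  | syncUp hn he hf hidx hm => exact Or.inr ⟨he, by rwa [← h.typ_sync_conclusion hn he hf hidx]⟩

theorem flow_node_eq_of_left (hw : S.Flow n v w) (hw' : S.Flow n' v w') : n = n' := by
  obtain ⟨e, m, rfl, hent⟩ := h.enters_of_flow hw
  obtain ⟨_, _, heq, hent'⟩ := h.enters_of_flow hw'
  cases heq
  exact hent.node_unique hent'

theorem ax_conclusion_unique (hn : S.sort n = .ax) (he : S.src e = n) (hf : S.src f = n)
    (hfe : f ≠ e) (hg : S.src g = n) (hge : g ≠ e) : f = g := by
  obtain ⟨c, -, -, hall⟩ := h.exists_ax_conclusion hn he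
  rw [((hall f).1 hf).resolve_left hfe, ((hall g).1 hg).resolve_left hge]

theorem cut_premiss_unique (hn : S.sort n = .cut) (he : S.tgt e = some n) (hf : S.tgt f = some n)
    (hfe : f ≠ e) (hg : S.tgt g = some n) (hge : g ≠ e) : f = g := by
  obtain ⟨c, -, -, hall⟩ := h.exists_cut_premiss hn he
  rw [((hall f).1 hf).resolve_left hfe, ((hall g).1 hg).resolve_left hge]

theorem mult_conclusion_unique (hn : S.sort n = .tens ∨ S.sort n = .parr) (hf : S.src f = n)
    (hg : S.src g = n) : f = g := by
  obtain ⟨p, c, hlink, -⟩ := h.exists_isMultLink hn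
  rw [(hlink.src_iff f).1 hf, (hlink.src_iff g).1 hg]

theorem mult_premiss_unique (hn : S.sort n = .tens ∨ S.sort n = .parr) (he : S.tgt e = some n)
    (hf : S.tgt f = some n) (hidx : S.pIdx e = S.pIdx f) : e = f := by
  obtain ⟨p, c, hlink, -⟩ := h.exists_isMultLink hn
  obtain ⟨b, rfl⟩ := (hlink.tgt_iff e).1 he
  exact (hlink.eq_prem hf (hidx ▸ hlink.pIdx_eq b)).symm

theorem sync_conclusion_unique (hn : S.sort n = .sync) (he : S.tgt e = some n)
    (hf : S.src f = n) (hidx : S.cIdx f = S.pIdx e) (hg : S.src g = n)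
    (hidx' : S.cIdx g = S.pIdx e) : f = g :=
  (h.existsUnique_sync_conclusion hn he).unique ⟨hf, hidx⟩ ⟨hg, hidx'⟩

theorem sync_premiss_unique (hn : S.sort n = .sync) (hf : S.src f = n) (he : S.tgt e = some n)
    (hidx : S.cIdx f = S.pIdx e) (hg : S.tgt g = some n) (hidx' : S.cIdx f = S.pIdx g) : e = g :=
  (h.existsUnique_sync_premiss hn hf).unique ⟨he, hidx.symm⟩ ⟨hg, hidx'.symm⟩

theorem flow_right_unique (hw : S.Flow n v w) (hw' : S.Flow n' v w') : w = w' := by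
  obtain rfl := h.flow_node_eq_of_left hw hw'
  have hpol {e m} := @Formula.PosOcc.not_negOcc (S.typ e) m
  cases hw <;> cases hw' <;>
    grind [h.ax_conclusion_unique, h.cut_premiss_unique, h.mult_conclusion_unique,
      h.mult_premiss_unique, h.sync_conclusion_unique, h.sync_premiss_unique]

theorem flow_left_unique (hw : S.Flow n v w) (hw' : S.Flow n' v' w) : v = v' := by
  cases w with
  | lock f i => cases hw; cases hw'; rfl
  | atom f m =>
    obtain rfl := (h.leaves_of_flow hw).node_unique (h.leaves_of_flow hw')
    have hpol := @Formula.PosOcc.not_negOcc (S.typ f) m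
    cases hw <;> cases hw' <;>
      grind [h.ax_conclusion_unique, h.cut_premiss_unique, h.mult_conclusion_unique,
        h.mult_premiss_unique, h.sync_conclusion_unique, h.sync_premiss_unique,
        h.posOcc_mult, h.negOcc_mult, h.typ_sync_conclusion]

theorem exists_flow_of_posOcc (he : S.tgt e = some n) (hm : (S.typ e).PosOcc m) :
    ∃ w, S.Flow n (.atom e m) w := by
  rcases h.sort_tgt he with hn | hn | hn
  · obtain ⟨f, hne, -, hall⟩ := h.exists_cut_premiss hn he
    exact ⟨_, .cut hn he ((hall f).2 (Or.inr rfl)) hne hm⟩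
  · obtain ⟨p, g, hlink, -⟩ := h.exists_isMultLink hn
    obtain ⟨b, rfl⟩ := (hlink.tgt_iff e).1 he
    exact ⟨_, .multDown hn he ((hlink.src_iff g).2 rfl) (hlink.pIdx_eq b) hm⟩
  · obtain ⟨f, ⟨hf, hidx⟩, -⟩ := h.existsUnique_sync_conclusion hn he
    exact ⟨_, .syncDown hn he hf hidx hm⟩

theorem exists_flow_mult_of_negOcc (hn : S.sort n = .tens ∨ S.sort n = .parr) (he : S.src e = n)
    (hm : (S.typ e).NegOcc m) : ∃ w, S.Flow n (.atom e m) w := by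
  obtain ⟨p, g, hlink, hroot, -⟩ := h.exists_isMultLink hn
  obtain rfl := (hlink.src_iff e).1 he
  rcases m with _ | ⟨b, m⟩
  · obtain ⟨a, ha, hatom⟩ := hm.atomOcc
    simp only [Formula.sub, Option.some.injEq] at ha
    exact (hroot (ha ▸ hatom)).elim
  · exact ⟨_, .multUp hn ((hlink.tgt_iff _).2 ⟨b, rfl⟩) he (hlink.pIdx_eq b) hm⟩

theorem exists_flow_of_negOcc (he : S.src e = n) (hm : (S.typ e).NegOcc m) :
    ∃ w, S.Flow n (.atom e m) w := by
  cases hn : S.sort n with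
  | ax =>
    obtain ⟨f, hne, -, hall⟩ := h.exists_ax_conclusion hn he
    exact ⟨_, .ax hn he ((hall f).2 (Or.inr rfl)) hne hm⟩
  | cut => exact (h.sort_src_ne_cut e (he ▸ hn)).elim
  | tens => exact h.exists_flow_mult_of_negOcc (Or.inl hn) he hm
  | parr => exact h.exists_flow_mult_of_negOcc (Or.inr hn) he hm
  | one =>
    rw [h.typ_of_one (he ▸ hn)] at hm
    exact (Formula.Positive.one.not_negOcc m hm).elim
  | bot =>
    rw [h.typ_of_bot (he ▸ hn)] at hm
    rcases m with _ | _
    · exact ⟨_, .lock hn he⟩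
    · simp [Formula.NegOcc, Formula.sub] at hm
  | sync =>
    obtain ⟨f, ⟨hf, hidx⟩, -⟩ := h.existsUnique_sync_premiss hn he
    exact ⟨_, .syncUp hn hf he hidx.symm hm⟩

theorem exists_flow (he : Enters n e m) : ∃ w, S.Flow n (.atom e m) w :=
  he.elim (fun ⟨htgt, hm⟩ => h.exists_flow_of_posOcc htgt hm)
    fun ⟨hsrc, hm⟩ => h.exists_flow_of_negOcc hsrc hm

theorem exists_sync_flow_to (hn : S.sort n = .sync) (he : Leaves n e m) :
    ∃ v, S.Flow n v (.atom e m) := by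
  rcases he with ⟨he, hm⟩ | ⟨he, hm⟩
  · obtain ⟨f, ⟨hf, hidx⟩, -⟩ := h.existsUnique_sync_premiss hn he
    exact ⟨_, .syncDown hn hf he hidx.symm (h.typ_sync_conclusion hn hf he hidx.symm ▸ hm)⟩
  · obtain ⟨f, ⟨hf, hidx⟩, -⟩ := h.existsUnique_sync_conclusion hn he
    exact ⟨_, .syncUp hn he hf hidx (by rwa [h.typ_sync_conclusion hn he hf hidx])⟩

theorem not_flow_to_origin {q : S.Edge × Formula.Addr} (hq : S.InitPos q ∨ S.OnePos q) :
    ¬ S.Flow n v (.atom q.1 q.2) := by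
  obtain ⟨e, m⟩ := q
  intro hflow
  rcases hq with ⟨htgt, hneg⟩ | ⟨hone, -⟩
  · rcases h.leaves_of_flow hflow with ⟨-, hpos⟩ | ⟨he, -⟩
    · exact hpos.not_negOcc hneg
    · exact Option.some_ne_none _ (he.symm.trans htgt)
  · rcases h.leaves_of_flow hflow with ⟨he, -⟩ | ⟨-, hneg⟩
    · have hn : S.sort n = .one := he ▸ hone
      cases hflow <;> grind
    · rw [h.typ_of_one hone] at hneg
      exact Formula.Positive.one.not_negOcc _ hneg

theorem validVal_of_flow (hw : S.Flow n v w) : S.ValidVal w := by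
  cases w with
  | lock e i => cases hw with | lock hn he => exact (congrArg S.sort he).trans hn
  | atom e m => exact (h.leaves_of_flow hw).elim (·.2.atomOcc) (·.2.atomOcc)

end WF

end Struct

namespace Struct

variable {S : Struct} {n s u u' a b : S.Node} {ℓ : Option S.Node}

/-! ### Nesting of boxes -/

namespace WF

variable (h : S.WF)
include h

theorem box_mem_boxes (hn : S.box n = some b) : b ∈ S.boxes n :=
  h.boxes_eq_insert hn ▸ Finset.mem_insert_self b _

theorem box_induction {motive : S.Node → Prop} (none : ∀ n, S.box n = none → motive n)
    (some : ∀ n b, S.box n = some b → motive b → motive n) (n : S.Node) : motive n := by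
  induction hcard : (S.boxes n).card using Nat.strong_induction_on generalizing n with
  | _ k ih =>
    cases hn : S.box n with
    | none => exact none n hn
    | some b =>
      refine some n b hn (ih _ ?_ b rfl)
      rw [← hcard, h.boxes_eq_insert hn, Finset.card_insert_of_notMem (h.notMem_boxes_of_box_eq hn)]
      exact Nat.lt_succ_self _

theorem not_mem_boxes_self_of_mem (hb : b ∈ S.boxes n) : b ∉ S.boxes b := by
  induction n using h.box_induction with
  | none n hn => simp [h.boxes_eq_empty hn] at hb
  | some n c hn ih =>
    rw [h.boxes_eq_insert hn, Finset.mem_insert] at hb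
    rcases hb with rfl | hb
    · exact h.notMem_boxes_of_box_eq hn
    · exact ih hb

theorem boxes_subset_of_mem (hb : b ∈ S.boxes n) : S.boxes b ⊆ S.boxes n := by
  induction n using h.box_induction with
  | none n hn => simp [h.boxes_eq_empty hn] at hb
  | some n c hn ih =>
    rw [h.boxes_eq_insert hn] at hb ⊢
    rcases Finset.mem_insert.1 hb with rfl | hb
    · exact Finset.subset_insert _ _
    · exact (ih hb).trans (Finset.subset_insert _ _)

theorem mem_boxes_trichotomy (ha : a ∈ S.boxes n) (hb : b ∈ S.boxes n) :
    a = b ∨ a ∈ S.boxes b ∨ b ∈ S.boxes a := by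
  induction n using h.box_induction with
  | none n hn => simp [h.boxes_eq_empty hn] at hb
  | some n c hn ih =>
    rw [h.boxes_eq_insert hn, Finset.mem_insert] at ha hb
    rcases ha with rfl | ha <;> rcases hb with rfl | hb
    · exact Or.inl rfl
    · exact Or.inr (Or.inr hb)
    · exact Or.inr (Or.inl ha)
    · exact ih ha hb

theorem boxes_eq_of_box_eq (hab : S.box a = S.box b) : S.boxes a = S.boxes b := by
  cases hb : S.box b with
  | none => rw [h.boxes_eq_empty hb, h.boxes_eq_empty (hab.trans hb)]
  | some c => rw [h.boxes_eq_insert hb, h.boxes_eq_insert (hab.trans hb)]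

theorem boxes_subset_boxes (hn : S.boxes n ⊆ S.boxes s) (hb : b ∈ S.boxes s)
    (hbn : b ∉ S.boxes n) : S.boxes n ⊆ S.boxes b := by
  cases hbox : S.box n with
  | none => simp [h.boxes_eq_empty hbox]
  | some c =>
    have hc := h.box_mem_boxes hbox
    rcases h.mem_boxes_trichotomy (hn hc) hb with rfl | hcb | hbc
    · exact (hbn hc).elim
    · rw [h.boxes_eq_insert hbox]
      exact Finset.insert_subset hcb (h.boxes_subset_of_mem hcb)
    · exact (hbn (h.boxes_subset_of_mem hc hbc)).elim

theorem boxes_subset_of_card_le (ha : S.boxes a ⊆ S.boxes s) (hb : S.boxes b ⊆ S.boxes s)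
    (hcard : (S.boxes a).card ≤ (S.boxes b).card) : S.boxes a ⊆ S.boxes b := by
  cases hbox : S.box b with
  | none =>
    rw [h.boxes_eq_empty hbox, Finset.card_empty, Nat.le_zero, Finset.card_eq_zero] at hcard
    simp [hcard]
  | some c =>
    have hc := h.box_mem_boxes hbox
    by_cases hca : c ∈ S.boxes a
    · refine (Finset.eq_of_subset_of_card_le ?_ hcard).ge
      rw [h.boxes_eq_insert hbox]
      exact Finset.insert_subset hca (h.boxes_subset_of_mem hca)
    · exact (h.boxes_subset_boxes ha (hb hc) hca).trans (h.boxes_subset_of_mem hc)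

theorem repAt_of_mem_boxes (hb : b ∈ S.boxes n) (hu : S.RepAt ℓ b u) : S.RepAt ℓ n u := by
  rcases hu with ⟨hbox, rfl⟩ | ⟨hu, hbox⟩
  · exact Or.inr ⟨hb, hbox⟩
  · exact Or.inr ⟨h.boxes_subset_of_mem hb hu, hbox⟩

theorem repAt_unique (hu : S.RepAt ℓ n u) (hu' : S.RepAt ℓ n u') : u = u' := by
  have not_mem {a b} (ha : a ∈ S.boxes n) (hab : S.box a = S.box b) : a ∉ S.boxes b :=
    h.boxes_eq_of_box_eq hab ▸ h.not_mem_boxes_self_of_mem ha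
  rcases hu with ⟨hn, rfl⟩ | ⟨hu, hbox⟩ <;> rcases hu' with ⟨hn', rfl⟩ | ⟨hu', hbox'⟩
  · rfl
  · exact (not_mem hu' (hbox'.trans hn.symm) hu').elim
  · exact (not_mem hu (hbox.trans hn'.symm) hu).elim
  · rcases h.mem_boxes_trichotomy hu hu' with heq | hmem | hmem
    · exact heq
    · exact (not_mem hu (hbox.trans hbox'.symm) hmem).elim
    · exact (not_mem hu' (hbox'.trans hbox.symm) hmem).elim

theorem exists_repAt (hsub : S.boxes s ⊆ S.boxes n) : ∃ u, S.RepAt (S.box s) n u := by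
  induction n using h.box_induction with
  | none n hn =>
    refine ⟨n, Or.inl ⟨?_, rfl⟩⟩
    cases hs : S.box s with
    | none => exact hn
    | some c =>
      have hc := hsub (h.box_mem_boxes hs)
      simp [h.boxes_eq_empty hn] at hc
  | some n b hn ih =>
    by_cases hs : S.box n = S.box s
    · exact ⟨n, Or.inl ⟨hs, rfl⟩⟩
    have hbs : b ∉ S.boxes s := by
      intro hbs
      cases hc : S.box s with
      | none => simp [h.boxes_eq_empty hc] at hbs
      | some c =>
        have hcb : c ≠ b := fun heq => hs (by rw [hn, hc, heq])
        have hcmem : c ∈ S.boxes b := by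
          simpa [h.boxes_eq_insert hn, hcb] using hsub (h.box_mem_boxes hc)
        have hbmem : b ∈ S.boxes c := by
          simpa [h.boxes_eq_insert hc, hcb.symm] using hbs
        exact h.notMem_boxes_of_box_eq hn (h.boxes_subset_of_mem hcmem hbmem)
    have hb := h.box_mem_boxes hn
    obtain ⟨u, hu⟩ := ih (h.boxes_subset_boxes hsub hb hbs)
    exact ⟨u, h.repAt_of_mem_boxes hb hu⟩

end WF

end Struct

section FiniteDynamics

variable {α : Type*} [Finite α]

theorem exists_injective_cycle [Nonempty α] (f : α → α) :
    ∃ (k : ℕ) (v : Fin (k + 1) → α), Function.Injective v ∧ ∀ i, v (i + 1) = f (v i) := by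
  obtain ⟨x⟩ := ‹Nonempty α›
  obtain ⟨a, b, hab, heq⟩ : ∃ a b, a < b ∧ f^[a] x = f^[b] x := by
    obtain ⟨a, b, hne, heq⟩ := Finite.exists_ne_map_eq_of_infinite fun i : ℕ => f^[i] x
    rcases hne.lt_or_gt with hlt | hlt
    · exact ⟨a, b, hlt, heq⟩
    · exact ⟨b, a, hlt, heq.symm⟩
  have hper : f^[a] x ∈ Function.periodicPts f := by
    refine Function.mk_mem_periodicPts (Nat.sub_pos_of_lt hab) ?_
    rw [Function.IsPeriodicPt, Function.IsFixedPt, ← Function.iterate_add_apply,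
      Nat.sub_add_cancel hab.le, heq]
  obtain ⟨k, hk⟩ := Nat.exists_eq_succ_of_ne_zero
    (Function.minimalPeriod_pos_of_mem_periodicPts hper).ne'
  refine ⟨k, fun i => f^[i] (f^[a] x), fun i j hij => Fin.ext ?_, fun i => ?_⟩
  · exact Function.iterate_injOn_Iio_minimalPeriod (hk ▸ i.2) (hk ▸ j.2) hij
  · have hval : ((i + 1 : Fin (k + 1)) : ℕ) = (i + 1) % Function.minimalPeriod f (f^[a] x) := by
      rw [hk, Fin.val_add, Fin.val_one', Nat.add_mod_mod]
    simp only [hval, Function.iterate_mod_minimalPeriod_eq, Function.iterate_succ_apply']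

theorem exists_minimal_mapsTo {s : Set α} {f : α → α} (hs : s.Nonempty) (hf : s.MapsTo f s) :
    ∃ t ⊆ s, t.Nonempty ∧ t.MapsTo f t ∧ ∀ u ⊆ t, u.Nonempty → u.MapsTo f u → u = t := by
  obtain ⟨t, hts, ht⟩ := exists_minimal_le_of_wellFoundedLT
    (fun t : Set α => t.Nonempty ∧ t.MapsTo f t) s ⟨hs, hf⟩
  exact ⟨t, hts, ht.prop.1, ht.prop.2, fun u hut hu hfu => ht.eq_of_le ⟨hu, hfu⟩ hut⟩

end FiniteDynamics

namespace Struct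

/-! ### Endless itineraries and switching cycles -/

/-- A walk of a structure that can be continued forever: from a node `n` it leaves by the edge
`exit n`, upwards if this edge belongs to `up` and downwards otherwise, and it arrives at `next n`.
A step upwards may stop at a box containing the source of the edge instead of entering it. The last
three fields make the cycles of the walk switching ones. -/
structure Itinerary (S : Struct) where
  nodes : Set S.Node
  exit : S.Node → S.Edge
  next : S.Node → S.Node
  up : Set S.Edge
  next_mem : nodes.MapsTo next nodes
  tgt_exit : ∀ n ∈ nodes, exit n ∈ up → S.tgt (exit n) = some n
  boxes_subset_next : ∀ n ∈ nodes, exit n ∈ up → S.boxes n ⊆ S.boxes (next n)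
  next_eq_or_mem_boxes : ∀ n ∈ nodes, exit n ∈ up →
    next n = S.src (exit n) ∨ next n ∈ S.boxes (S.src (exit n))
  src_exit : ∀ n ∈ nodes, exit n ∉ up → S.src (exit n) = n
  tgt_exit_eq_next : ∀ n ∈ nodes, exit n ∉ up → S.tgt (exit n) = some (next n)
  exit_next_of_parr : ∀ n ∈ nodes, exit n ∉ up → S.sort (next n) = .parr → exit (next n) ∉ up
  mem_up_of_positive : ∀ n ∈ nodes, (S.typ (exit n)).Positive → exit n ∈ up
  notMem_up_of_negative : ∀ n ∈ nodes, (S.typ (exit n)).Negative → exit n ∉ up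

namespace Itinerary

variable {S : Struct} (I : S.Itinerary) {n u w : S.Node} {ℓ : Option S.Node}

theorem exit_injOn : I.nodes.InjOn I.exit := by
  intro a ha b hb hab
  by_cases hup : I.exit a ∈ I.up
  · have hb' := I.tgt_exit b hb (hab ▸ hup)
    exact Option.some.inj ((I.tgt_exit a ha hup).symm.trans (hab ▸ hb'))
  · have hb' := I.src_exit b hb (hab ▸ hup)
    exact (I.src_exit a ha hup).symm.trans (hab ▸ hb')

theorem exists_outermost (h : S.WF) {t : Set S.Node} (ht : t ⊆ I.nodes) (hne : t.Nonempty)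
    (hmin : ∀ u ⊆ t, u.Nonempty → u.MapsTo I.next u → u = t) (hnext : t.MapsTo I.next t) :
    ∃ s ∈ t, ∀ n ∈ t, S.boxes s ⊆ S.boxes n := by
  obtain ⟨s, hs, hcard⟩ :=
    Set.exists_min_image t (fun n => (S.boxes n).card) t.toFinite hne
  have hclosed : {n ∈ t | S.boxes s ⊆ S.boxes n}.MapsTo I.next
      {n ∈ t | S.boxes s ⊆ S.boxes n} := by
    rintro n ⟨hn, hsub⟩
    refine ⟨hnext hn, ?_⟩
    by_cases hup : I.exit n ∈ I.up
    · exact hsub.trans (I.boxes_subset_next n (ht hn) hup)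
    · refine h.boxes_subset_of_card_le hsub ?_ (hcard _ (hnext hn))
      have hstep := h.boxes_tgt_subset (I.tgt_exit_eq_next n (ht hn) hup)
      rwa [I.src_exit n (ht hn) hup] at hstep
  have heq := hmin _ (Set.sep_subset t _) ⟨s, hs, Finset.Subset.refl _⟩ hclosed
  exact ⟨s, hs, fun n hn => (heq.ge hn).2⟩

theorem exists_representative_cycle (h : S.WF) (hne : I.nodes.Nonempty) :
    ∃ (ℓ : Option S.Node) (k : ℕ) (x v : Fin (k + 1) → S.Node), Function.Injective v ∧
      ∀ i, x i ∈ I.nodes ∧ S.RepAt ℓ (x i) (v i) ∧ S.RepAt ℓ (I.next (x i)) (v (i + 1)) ∧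
        (v (i + 1) ≠ v i ∨ S.box (x i) = ℓ) := by
  obtain ⟨t, ht, htne, hnext, hmin⟩ := exists_minimal_mapsTo hne I.next_mem
  obtain ⟨s, hs, hout⟩ := I.exists_outermost h ht htne hmin hnext
  choose! rep hrep using fun n (hn : n ∈ t) => h.exists_repAt (hout n hn)
  -- A fibre of `rep` that is never left is all of `t`, hence contains `s`, which is at level `ℓ`.
  have hexit : ∀ w : rep '' t, ∃ n ∈ t,
      rep n = w ∧ (rep (I.next n) ≠ rep n ∨ S.box n = S.box s) := by
    rintro ⟨_, n, hn, rfl⟩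
    by_contra! hstay
    have hfibre := hmin {x ∈ t | rep x = rep n} (Set.sep_subset t _) ⟨n, hn, rfl⟩
      fun x hx => ⟨hnext hx.1, (hstay x hx.1 hx.2).1.trans hx.2⟩
    exact (hstay s hs (hfibre.ge hs).2).2 rfl
  choose x hx hxrep hxexit using hexit
  have : Nonempty (rep '' t) := (htne.image rep).to_subtype
  obtain ⟨k, v, hv, hstep⟩ :=
    exists_injective_cycle fun w : rep '' t => ⟨rep (I.next (x w)), _, hnext (hx w), rfl⟩
  refine ⟨S.box s, k, fun i => x (v i), fun i => v i, Subtype.val_injective.comp hv, fun i => ?_⟩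
  have hval : (v (i + 1) : S.Node) = rep (I.next (x (v i))) := congrArg Subtype.val (hstep i)
  have hrep_x := hrep _ (hx (v i))
  have hrep_next := hrep _ (hnext (hx (v i)))
  have hleave := hxexit (v i)
  rw [hxrep (v i)] at hrep_x hleave
  rw [← hval] at hrep_next hleave
  exact ⟨ht (hx _), hrep_x, hrep_next, hleave⟩

theorem repAt_src_exit (h : S.WF) (hn : n ∈ I.nodes) (hup : I.exit n ∈ I.up)
    (hw : S.RepAt ℓ (I.next n) w) : S.RepAt ℓ (S.src (I.exit n)) w := by
  rcases I.next_eq_or_mem_boxes n hn hup with heq | hmem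
  · exact heq ▸ hw
  · exact h.repAt_of_mem_boxes hmem hw

theorem connectsAt_exit (h : S.WF) (hn : n ∈ I.nodes) (hu : S.RepAt ℓ n u)
    (hw : S.RepAt ℓ (I.next n) w) (hleave : w ≠ u ∨ S.box n = ℓ) :
    S.ConnectsAt ℓ (I.exit n) u w := by
  by_cases hup : I.exit n ∈ I.up
  · refine ⟨n, I.tgt_exit n hn hup, Or.inl ?_, Or.inr ⟨I.repAt_src_exit h hn hup hw, hu⟩⟩
    refine hleave.elim (fun hne => ?_) id
    rcases hu with ⟨hbox, -⟩ | ⟨hmem, hbox⟩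
    · exact hbox
    · exact (hne (h.repAt_unique hw (Or.inr ⟨I.boxes_subset_next n hn hup hmem, hbox⟩))).elim
  · have hsrc := I.src_exit n hn hup
    have htgt := I.tgt_exit_eq_next n hn hup
    refine ⟨_, htgt, ?_, Or.inl ⟨hsrc.symm ▸ hu, hw⟩⟩
    refine hleave.elim (fun hne => Or.inl ?_) fun hbox => Or.inr (hsrc.symm ▸ hbox)
    rcases hw with ⟨hbox, -⟩ | ⟨hmem, hbox⟩
    · exact hbox
    · have hmem' := hsrc ▸ h.boxes_tgt_subset htgt hmem
      exact (hne (h.repAt_unique (Or.inr ⟨hmem', hbox⟩) hu)).elim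

theorem repAt_of_outEdge {l : S.Node} (h : S.WF) (hn : n ∈ I.nodes)
    (hout : S.OutEdgeOf l (I.exit n)) (hw : S.RepAt ℓ (I.next n) w) : S.RepAt ℓ l w := by
  rcases hout.2 with ⟨hsrc, hpos⟩ | ⟨htgt, hneg⟩
  · exact hsrc ▸ I.repAt_src_exit h hn (I.mem_up_of_positive n hn hpos) hw
  · have hnext := I.tgt_exit_eq_next n hn (I.notMem_up_of_negative n hn hneg)
    exact Option.some.inj (hnext.symm.trans htgt) ▸ hw

theorem exists_switchingCycleAt (h : S.WF) (hne : I.nodes.Nonempty) :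
    ∃ ℓ, S.SwitchingCycleAt ℓ := by
  obtain ⟨ℓ, k, x, v, hv, hxv⟩ := I.exists_representative_cycle h hne
  choose hx hrep hrep_next hleave using hxv
  have next_inj {i j} (heq : v (i + 1) = v (j + 1)) : i = j := add_right_cancel (hv heq)
  have x_inj : Function.Injective x := fun i j hij =>
    hv (h.repAt_unique (hrep i) (hij ▸ hrep j))
  refine ⟨ℓ, k, v, fun i => I.exit (x i), hv,
    fun i j hij => x_inj (I.exit_injOn (hx i) (hx j) hij),
    fun i => I.connectsAt_exit h (hx i) (hrep i) (hrep_next i) (hleave i),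
    fun p hp i hi j hj => ?_, fun l _ i hi j hj => next_inj ?_⟩
  · have not_mixed {i j} (hi : S.tgt (I.exit (x i)) = some p) (hj : S.tgt (I.exit (x j)) = some p)
        (hiup : I.exit (x i) ∈ I.up) : I.exit (x j) ∈ I.up := by
      by_contra hjup
      obtain rfl := Option.some.inj (hi.symm.trans (I.tgt_exit _ (hx i) hiup))
      have hnext := Option.some.inj (hj.symm.trans (I.tgt_exit_eq_next _ (hx j) hjup))
      exact I.exit_next_of_parr _ (hx j) hjup (hnext ▸ hp) (hnext ▸ hiup)
    by_cases hiup : I.exit (x i) ∈ I.up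
    · have hjup := not_mixed hi hj hiup
      exact x_inj (Option.some.inj ((I.tgt_exit _ (hx i) hiup).symm.trans
        (hi.trans (hj.symm.trans (I.tgt_exit _ (hx j) hjup)))))
    · have hjup := mt (not_mixed hj hi) hiup
      have hnext := Option.some.inj ((I.tgt_exit_eq_next _ (hx i) hiup).symm.trans
        (hi.trans (hj.symm.trans (I.tgt_exit_eq_next _ (hx j) hjup))))
      exact next_inj (h.repAt_unique (hrep_next i) (hnext ▸ hrep_next j))
  · exact h.repAt_unique (I.repAt_of_outEdge h (hx i) hi (hrep_next i))
      (I.repAt_of_outEdge h (hx j) hj (hrep_next j))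

end Itinerary

end Struct

namespace Struct

/-! ### Stalled configurations -/

variable {S : Struct} {W : Set S.PosVal} {n n' b : S.Node} {e f g : S.Edge} {m : Formula.Addr}

/-- The box of the `⊥`-link `b` is locked as long as its lock waits for a token, where `W` is the
set of all positions waiting for a token. -/
def Locked (W : Set S.PosVal) (b : S.Node) : Prop :=
  S.sort b = .bot ∧ ∃ e, S.src e = b ∧ .lock e 0 ∈ W

/-- No box around the node `n` is locked. -/
def Accessible (W : Set S.PosVal) (n : S.Node) : Prop := ∀ b ∈ S.boxes n, ¬ Locked W b

/-- The positions of `W` can wait for a token forever: a token never has to stop in front of an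
accessible link, except that it may wait at a sync link for the other tokens to arrive. -/
structure IsStalled (W : Set S.PosVal) : Prop where
  mem_iff : ∀ {n v w}, Accessible W n → S.Flow n v w → S.sort n ≠ .sync → (v ∈ W ↔ w ∈ W)
  exists_mem_of_sync : ∀ {n v w}, Accessible W n → S.Flow n v w → S.sort n = .sync → w ∈ W →
    ∃ v' w', S.Flow n v' w' ∧ v' ∈ W
  notMem_of_one : ∀ {e}, Accessible W (S.src e) → S.sort (S.src e) = .one → .atom e [] ∉ W
  notMem_of_concl : ∀ {e m}, S.tgt e = none → (S.typ e).NegOcc m → .atom e m ∉ W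

/-- The coherence label of the edge `e`, the positions of `W` being marked. -/
noncomputable def label (W : Set S.PosVal) (e : S.Edge) : SignType :=
  (S.typ e).coherence fun m => .atom e m ∈ W

/-- A node which the search for the cause of a wait can reach. -/
def Pursued (W : Set S.PosVal) (n : S.Node) : Prop :=
  Accessible W n ∧ (Locked W n ∨ (∃ e, S.src e = n ∧ label W e = -1) ∨
    ∃ e, S.tgt e = some n ∧ label W e = 1)

/-- The edge `e` leads from `n` towards the cause of a wait, upwards if its label is `-1` and
downwards if it is `1`; of the two directions available at a `⅋`-link, the latter is preferred. -/
def Pursues (W : Set S.PosVal) (n : S.Node) (e : S.Edge) : Prop :=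
  (S.tgt e = some n ∧ label W e = -1 ∨ S.src e = n ∧ label W e = 1) ∧
    (S.sort n = .parr → ∀ g, S.src g = n → label W g = 1 → label W e = 1)

theorem label_nonpos (he : (S.typ e).Positive) : label W e ≤ 0 :=
  Formula.coherence_nonpos fun m hm => (he.not_negOcc m hm).elim

theorem label_nonneg (he : (S.typ e).Negative) : 0 ≤ label W e :=
  Formula.coherence_nonneg fun m hm => (he.not_posOcc m hm).elim

theorem label_ne_zero : label W e ≠ 0 ↔ ∃ m, (S.typ e).AtomOcc m ∧ .atom e m ∈ W :=
  Formula.coherence_ne_zero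

theorem label_eq_neg_one_of_positive (he : (S.typ e).Positive) (hne : label W e ≠ 0) :
    label W e = -1 :=
  (SignType.neg_iff.1 (lt_of_le_of_ne (label_nonpos he) hne))

theorem label_eq_one_of_negative (he : (S.typ e).Negative) (hne : label W e ≠ 0) :
    label W e = 1 :=
  (SignType.pos_iff.1 (lt_of_le_of_ne (label_nonneg he) hne.symm))

theorem label_eq_neg_of_dual (htyp : S.typ f = (S.typ e).dual)
    (hmem : ∀ m, (S.typ e).AtomOcc m → (.atom e m ∈ W ↔ .atom f m ∈ W)) :
    label W f = -label W e := by
  rw [label, htyp, Formula.coherence_dual, label, Formula.coherence_congr hmem]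

namespace WF

variable (h : S.WF)
include h

theorem exists_outermost_locked (hn : ¬ Accessible W n) :
    ∃ b ∈ S.boxes n, Locked W b ∧ Accessible W b := by
  induction n using h.box_induction with
  | none n hbox => simp [Accessible, h.boxes_eq_empty hbox] at hn
  | some n c hbox ih =>
    by_cases hc : Accessible W c
    · refine ⟨c, h.box_mem_boxes hbox, ?_, hc⟩
      by_contra hopen
      refine hn fun b hb => ?_
      rw [h.boxes_eq_insert hbox, Finset.mem_insert] at hb
      rcases hb with rfl | hb
      · exact hopen
      · exact hc b hb
    · obtain ⟨b, hb, hlocked⟩ := ih hc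
      exact ⟨b, h.boxes_subset_of_mem (h.box_mem_boxes hbox) hb, hlocked⟩

theorem accessible_tgt (he : S.tgt e = some n) (hacc : Accessible W (S.src e)) : Accessible W n :=
  fun b hb => hacc b (h.boxes_tgt_subset he hb)

theorem pursued_of_locked (hb : Locked W b) : ∃ n, Pursued W n := by
  by_cases hacc : Accessible W b
  · exact ⟨b, hacc, Or.inl hb⟩
  · obtain ⟨c, -, hc, hacc⟩ := h.exists_outermost_locked hacc
    exact ⟨c, hacc, Or.inl hc⟩

theorem exists_pursued_above (hacc : Accessible W n) (he : S.tgt e = some n)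
    (hlabel : label W e = -1) :
    ∃ n', Pursued W n' ∧ S.boxes n ⊆ S.boxes n' ∧
      (n' = S.src e ∨ n' ∈ S.boxes (S.src e)) := by
  by_cases hsrc : Accessible W (S.src e)
  · exact ⟨_, ⟨hsrc, Or.inr (Or.inl ⟨e, rfl, hlabel⟩)⟩, h.boxes_tgt_subset he, Or.inl rfl⟩
  · obtain ⟨b, hb, hlocked, hacc_b⟩ := h.exists_outermost_locked hsrc
    have hbn : b ∉ S.boxes n := fun hbn => hacc b hbn hlocked
    exact ⟨b, ⟨hacc_b, Or.inl hlocked⟩, h.boxes_subset_boxes (h.boxes_tgt_subset he) hb hbn,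
      Or.inr hb⟩

end WF

namespace IsStalled

variable (hW : IsStalled W)
include hW

theorem label_concl_ne_one (he : S.tgt e = none) : label W e ≠ 1 := by
  have hle : label W e ≤ 0 := Formula.coherence_nonpos fun _ => hW.notMem_of_concl he
  exact fun heq => absurd (heq ▸ hle) (by decide)

theorem label_eq_neg_of_ax (h : S.WF) (hacc : Accessible W n) (hn : S.sort n = .ax)
    (he : S.src e = n) (hf : S.src f = n) (hne : f ≠ e) : label W f = -label W e := by
  have htyp := h.typ_ax hn he hf hne
  refine label_eq_neg_of_dual htyp fun m hm => ?_
  rcases Formula.atomOcc_iff.1 hm with hm | hm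
  · exact (hW.mem_iff hacc (.ax hn hf he hne.symm (htyp ▸ hm.dual)) (by simp [hn])).symm
  · exact hW.mem_iff hacc (.ax hn he hf hne hm) (by simp [hn])

theorem label_eq_neg_of_cut (h : S.WF) (hacc : Accessible W n) (hn : S.sort n = .cut)
    (he : S.tgt e = some n) (hf : S.tgt f = some n) (hne : f ≠ e) : label W f = -label W e := by
  have htyp := h.typ_cut hn he hf hne
  refine label_eq_neg_of_dual htyp fun m hm => ?_
  rcases Formula.atomOcc_iff.1 hm with hm | hm
  · exact hW.mem_iff hacc (.cut hn he hf hne hm) (by simp [hn])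
  · exact (hW.mem_iff hacc (.cut hn hf he hne.symm (htyp ▸ hm.dual)) (by simp [hn])).symm

theorem coherence_prem_eq_label (h : S.WF) (hacc : Accessible W n)
    (hn : S.sort n = .tens ∨ S.sort n = .parr) {p : Bool → S.Edge} (hlink : IsMultLink n p g)
    (b : Bool) : ((S.typ (p b)).coherence fun m => .atom g (b :: m) ∈ W) = label W (p b) := by
  have htgt := (hlink.tgt_iff (p b)).2 ⟨b, rfl⟩
  have hsrc := (hlink.src_iff g).2 rfl
  have hsync : S.sort n ≠ .sync := by rcases hn with hn | hn <;> simp [hn]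
  refine Formula.coherence_congr fun m hm => ?_
  rcases Formula.atomOcc_iff.1 hm with hm | hm
  · exact (hW.mem_iff hacc (.multDown hn htgt hsrc (hlink.pIdx_eq b) hm) hsync).symm
  · have hm' := (h.negOcc_mult hn htgt hsrc (hlink.pIdx_eq b)).2 hm
    exact hW.mem_iff hacc (.multUp hn htgt hsrc (hlink.pIdx_eq b) hm') hsync

theorem exists_label_tens (h : S.WF) (hacc : Accessible W n) (hn : S.sort n = .tens) :
    ∃ p g, IsMultLink n p g ∧
      label W g = Formula.tensCoh (label W (p false)) (label W (p true)) := by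
  obtain ⟨p, g, hlink, htyp⟩ := h.exists_isMultLink_tens hn
  refine ⟨p, g, hlink, ?_⟩
  rw [label, htyp, Formula.coherence, hW.coherence_prem_eq_label h hacc (Or.inl hn) hlink,
    hW.coherence_prem_eq_label h hacc (Or.inl hn) hlink]

theorem exists_label_parr (h : S.WF) (hacc : Accessible W n) (hn : S.sort n = .parr) :
    ∃ p g, IsMultLink n p g ∧
      label W g = Formula.parrCoh (label W (p false)) (label W (p true)) := by
  obtain ⟨p, g, hlink, htyp⟩ := h.exists_isMultLink_parr hn
  refine ⟨p, g, hlink, ?_⟩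
  rw [label, htyp, Formula.coherence, hW.coherence_prem_eq_label h hacc (Or.inr hn) hlink,
    hW.coherence_prem_eq_label h hacc (Or.inr hn) hlink]

theorem exists_pursues_ax (h : S.WF) (hn : S.sort n = .ax) (hacc : Accessible W n)
    (he : S.src e = n) (hlabel : label W e = -1) : ∃ f, Pursues W n f := by
  obtain ⟨f, hne, -, hsrc⟩ := h.exists_ax_conclusion hn he
  have hf := (hsrc f).2 (Or.inr rfl)
  refine ⟨f, Or.inr ⟨hf, ?_⟩, by simp [hn]⟩
  rw [hW.label_eq_neg_of_ax h hacc hn he hf hne, hlabel, neg_neg]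

theorem exists_pursues_cut (h : S.WF) (hn : S.sort n = .cut) (hacc : Accessible W n)
    (he : S.tgt e = some n) (hlabel : label W e = 1) : ∃ f, Pursues W n f := by
  obtain ⟨f, hne, -, htgt⟩ := h.exists_cut_premiss hn he
  have hf := (htgt f).2 (Or.inr rfl)
  refine ⟨f, Or.inl ⟨hf, ?_⟩, by simp [hn]⟩
  rw [hW.label_eq_neg_of_cut h hacc hn he hf hne, hlabel]

theorem exists_pursues_tens (h : S.WF) (hn : S.sort n = .tens) (hacc : Accessible W n)
    (harrive : (∃ e, S.src e = n ∧ label W e = -1) ∨ ∃ e, S.tgt e = some n ∧ label W e = 1) :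
    ∃ f, Pursues W n f := by
  obtain ⟨p, g, hlink, hlabel⟩ := hW.exists_label_tens h hacc hn
  have hg := (hlink.src_iff g).2 rfl
  have hp (b) := (hlink.tgt_iff (p b)).2 ⟨b, rfl⟩
  have tensCoh_cases : ∀ x y : SignType, Formula.tensCoh x y = -1 ∨ x = 1 ∨ y = 1 →
      x = -1 ∨ y = -1 ∨ Formula.tensCoh x y = 1 := by decide
  have hcases : label W g = -1 ∨ label W (p false) = 1 ∨ label W (p true) = 1 := by
    rcases harrive with ⟨e, he, heq⟩ | ⟨e, he, heq⟩
    · exact Or.inl ((hlink.src_iff e).1 he ▸ heq)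
    · obtain ⟨_ | _, rfl⟩ := (hlink.tgt_iff e).1 he
      · exact Or.inr (Or.inl heq)
      · exact Or.inr (Or.inr heq)
  rcases tensCoh_cases _ _ (hlabel ▸ hcases) with heq | heq | heq
  · exact ⟨p false, Or.inl ⟨hp false, heq⟩, by simp [hn]⟩
  · exact ⟨p true, Or.inl ⟨hp true, heq⟩, by simp [hn]⟩
  · exact ⟨g, Or.inr ⟨hg, hlabel.trans heq⟩, by simp [hn]⟩

theorem label_concl_of_parr (h : S.WF) (hn : S.sort n = .parr) (hacc : Accessible W n)
    (he : S.tgt e = some n) (heq : label W e = 1) : ∃ g, S.src g = n ∧ label W g = 1 := by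
  obtain ⟨p, g, hlink, hlabel⟩ := hW.exists_label_parr h hacc hn
  refine ⟨g, (hlink.src_iff g).2 rfl, hlabel.trans (if_pos ?_)⟩
  obtain ⟨_ | _, rfl⟩ := (hlink.tgt_iff e).1 he
  · exact Or.inl heq
  · exact Or.inr heq

theorem exists_pursues_parr (h : S.WF) (hn : S.sort n = .parr) (hacc : Accessible W n)
    (harrive : (∃ e, S.src e = n ∧ label W e = -1) ∨ ∃ e, S.tgt e = some n ∧ label W e = 1) :
    ∃ f, Pursues W n f := by
  rcases harrive with ⟨e, he, heq⟩ | ⟨e, he, heq⟩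
  · obtain ⟨p, g, hlink, hlabel⟩ := hW.exists_label_parr h hacc hn
    obtain rfl := (hlink.src_iff e).1 he
    have hp (b) := (hlink.tgt_iff (p b)).2 ⟨b, rfl⟩
    have hpref (f) (_ : S.sort n = .parr) (g) (hg : S.src g = n) (hone : label W g = 1) :
        label W f = 1 := by
      rw [(hlink.src_iff g).1 hg, heq] at hone
      exact absurd hone (by decide)
    have parrCoh_cases : ∀ x y : SignType, Formula.parrCoh x y = -1 → x = -1 ∨ y = -1 := by decide
    rcases parrCoh_cases _ _ (hlabel ▸ heq) with heq | heq
    · exact ⟨p false, Or.inl ⟨hp false, heq⟩, hpref _⟩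
    · exact ⟨p true, Or.inl ⟨hp true, heq⟩, hpref _⟩
  · obtain ⟨g, hg, hlabel⟩ := hW.label_concl_of_parr h hn hacc he heq
    exact ⟨g, Or.inr ⟨hg, hlabel⟩, fun _ _ _ _ => hlabel⟩

theorem exists_pursues_sync (h : S.WF) (hn : S.sort n = .sync) (hacc : Accessible W n)
    (hleaves : Leaves n e m) (hm : .atom e m ∈ W) : ∃ f, Pursues W n f := by
  obtain ⟨v, hv⟩ := h.exists_sync_flow_to hn hleaves
  obtain ⟨v', w', hflow, hv'⟩ := hW.exists_mem_of_sync hacc hv hn hm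
  obtain ⟨f, m', rfl, ⟨hf, hocc⟩ | ⟨hf, hocc⟩⟩ := h.enters_of_flow hflow
  · have hpos := (h.polarized_of_sync_premiss hn hf).positive hocc
    have hne : label W f ≠ 0 := label_ne_zero.2 ⟨m', hocc.atomOcc, hv'⟩
    exact ⟨f, Or.inl ⟨hf, label_eq_neg_one_of_positive hpos hne⟩, by simp [hn]⟩
  · have hneg := (h.polarized_of_sync_conclusion hn hf).negative hocc
    have hne : label W f ≠ 0 := label_ne_zero.2 ⟨m', hocc.atomOcc, hv'⟩
    exact ⟨f, Or.inr ⟨hf, label_eq_one_of_negative hneg hne⟩, by simp [hn]⟩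

theorem exists_pursues_of_locked (h : S.WF) (hacc : Accessible W n) (hn : Locked W n) :
    ∃ f, Pursues W n f := by
  obtain ⟨hsort, e, he, hlock⟩ := hn
  have htyp := h.typ_of_bot (he.symm ▸ hsort)
  have hm := (hW.mem_iff hacc (.lock hsort he) (by simp [hsort])).2 hlock
  refine ⟨e, Or.inr ⟨he, ?_⟩, by simp [hsort]⟩
  exact label_eq_one_of_negative (htyp ▸ .bot)
    (label_ne_zero.2 ⟨[], ⟨.bot, by rw [htyp]; rfl, trivial⟩, hm⟩)

theorem exists_pursues (h : S.WF) (hn : Pursued W n) : ∃ f, Pursues W n f := by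
  obtain ⟨hacc, hlocked | harrive⟩ := hn
  · exact hW.exists_pursues_of_locked h hacc hlocked
  cases hsort : S.sort n with
  | tens => exact hW.exists_pursues_tens h hsort hacc harrive
  | parr => exact hW.exists_pursues_parr h hsort hacc harrive
  | ax =>
    rcases harrive with ⟨e, he, hlabel⟩ | ⟨e, he, -⟩
    · exact hW.exists_pursues_ax h hsort hacc he hlabel
    · simpa [hsort] using h.sort_tgt he
  | cut =>
    rcases harrive with ⟨e, he, -⟩ | ⟨e, he, hlabel⟩
    · exact (h.sort_src_ne_cut e (he ▸ hsort)).elim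
    · exact hW.exists_pursues_cut h hsort hacc he hlabel
  | one =>
    rcases harrive with ⟨e, rfl, hlabel⟩ | ⟨e, he, -⟩
    · have hm := hW.notMem_of_one hacc hsort
      simp [label, h.typ_of_one hsort, Formula.coherence, hm] at hlabel
    · simpa [hsort] using h.sort_tgt he
  | bot =>
    rcases harrive with ⟨e, rfl, hlabel⟩ | ⟨e, he, -⟩
    · have hle : 0 ≤ label W e := label_nonneg (h.typ_of_bot hsort ▸ .bot)
      exact absurd (hlabel ▸ hle) (by decide)
    · simpa [hsort] using h.sort_tgt he
  | sync =>
    rcases harrive with ⟨e, he, hlabel⟩ | ⟨e, he, hlabel⟩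
    · obtain ⟨m, hm, hmem⟩ := label_ne_zero.1 (hlabel.trans_ne (by decide))
      rcases h.polarized_of_sync_conclusion hsort he with hpol | hpol
      · exact hW.exists_pursues_sync h hsort hacc (Or.inl ⟨he, hpol.posOcc hm⟩) hmem
      · exact absurd (hlabel ▸ label_nonneg hpol) (by decide)
    · obtain ⟨m, hm, hmem⟩ := label_ne_zero.1 (hlabel.trans_ne (by decide))
      rcases h.polarized_of_sync_premiss hsort he with hpol | hpol
      · exact absurd (hlabel ▸ label_nonpos hpol) (by decide)
      · exact hW.exists_pursues_sync h hsort hacc (Or.inr ⟨he, hpol.negOcc hm⟩) hmem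

theorem exists_step (h : S.WF) (hn : Pursued W n) : ∃ e n', Pursues W n e ∧ Pursued W n' ∧
    (label W e = -1 → S.boxes n ⊆ S.boxes n' ∧ (n' = S.src e ∨ n' ∈ S.boxes (S.src e))) ∧
    (label W e = 1 → S.tgt e = some n') := by
  obtain ⟨e, hexit⟩ := hW.exists_pursues h hn
  rcases hexit.1 with ⟨he, hlabel⟩ | ⟨rfl, hlabel⟩
  · obtain ⟨n', hn', habove⟩ := h.exists_pursued_above hn.1 he hlabel
    exact ⟨e, n', hexit, hn', fun _ => habove, fun hone => absurd (hlabel ▸ hone) (by decide)⟩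
  · obtain ⟨n', he⟩ := Option.ne_none_iff_exists'.1 fun he => hW.label_concl_ne_one he hlabel
    exact ⟨e, n', hexit, ⟨h.accessible_tgt he hn.1, Or.inr (Or.inr ⟨e, he, hlabel⟩)⟩,
      fun hneg => absurd (hlabel ▸ hneg) (by decide), fun _ => he⟩

theorem not_pursued (h : S.WF) (hC : S.Correct) : ¬ Pursued W n := by
  intro hn
  have : Nonempty S.Edge := ⟨(hW.exists_pursues h hn).choose⟩
  choose! exit next hexit hnext hup hdown using fun n (hn : Pursued W n) => hW.exists_step h hn
  have label_up {n} (hn : Pursued W n) (hlabel : label W (exit n) = -1) :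
      S.tgt (exit n) = some n :=
    (hexit n hn).1.elim And.left fun hsrc => absurd (hlabel ▸ hsrc.2) (by decide)
  have label_down {n} (hn : Pursued W n) (hlabel : label W (exit n) ≠ -1) :
      S.src (exit n) = n ∧ label W (exit n) = 1 :=
    (hexit n hn).1.resolve_left fun htgt => hlabel htgt.2
  let I : S.Itinerary :=
    { nodes := {n | Pursued W n}
      exit := exit
      next := next
      up := {e | label W e = -1}
      next_mem := hnext
      tgt_exit := fun _ hn => label_up hn
      boxes_subset_next := fun n hn hlabel => (hup n hn hlabel).1
      next_eq_or_mem_boxes := fun n hn hlabel => (hup n hn hlabel).2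
      src_exit := fun _ hn hlabel => (label_down hn hlabel).1
      tgt_exit_eq_next := fun n hn hlabel => hdown n hn (label_down hn hlabel).2
      exit_next_of_parr := fun n hn hlabel hparr hneg => by
        have hone := (label_down hn hlabel).2
        obtain ⟨g, hg, hgone⟩ :=
          hW.label_concl_of_parr h hparr (hnext n hn).1 (hdown n hn hone) hone
        have heq := (hexit _ (hnext n hn)).2 hparr g hg hgone
        exact absurd (heq.symm.trans hneg) (by decide)
      mem_up_of_positive := fun n hn hpos => by
        by_contra hlabel
        exact absurd ((label_down hn hlabel).2 ▸ label_nonpos hpos) (by decide)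
      notMem_up_of_negative := fun n _ hneg hlabel =>
        absurd (hlabel ▸ label_nonneg hneg) (by decide) }
  obtain ⟨ℓ, hcycle⟩ := I.exists_switchingCycleAt h ⟨n, hn⟩
  exact hC ℓ hcycle

theorem not_locked (h : S.WF) (hC : S.Correct) : ¬ Locked W b := fun hb =>
  let ⟨_, hn⟩ := h.pursued_of_locked hb
  hW.not_pursued h hC hn

theorem atom_notMem (h : S.WF) (hC : S.Correct) (hm : (S.typ e).AtomOcc m) : .atom e m ∉ W := by
  have hacc (n) : Accessible W n := fun b _ => hW.not_locked h hC
  intro hmem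
  have hne := label_ne_zero.2 ⟨m, hm, hmem⟩
  rcases lt_or_gt_of_ne hne with hlt | hgt
  · exact hW.not_pursued h hC ⟨hacc _, Or.inr (Or.inl ⟨e, rfl, SignType.neg_iff.1 hlt⟩)⟩
  · have hlabel := SignType.pos_iff.1 hgt
    obtain ⟨n, he⟩ := Option.ne_none_iff_exists'.1 fun he => hW.label_concl_ne_one he hlabel
    exact hW.not_pursued h hC ⟨hacc n, Or.inr (Or.inr ⟨e, he, hlabel⟩)⟩

end IsStalled

end Struct

/-! ### Trajectories and their pasts -/

section Relation

open Relation

variable {α : Type*} {r : α → α → Prop} {a b c : α}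

theorem eq_of_reflTransGen_of_maximal (hr : Relator.RightUnique r) (ha : ∀ x, ¬ r a x)
    (hb : ∀ x, ¬ r b x) (hca : ReflTransGen r c a) (hcb : ReflTransGen r c b) : a = b := by
  rcases hca.total_of_right_unique hr hcb with hab | hba
  · exact (hab.cases_head.resolve_right fun ⟨x, hx, _⟩ => ha x hx)
  · exact (hba.cases_head.resolve_right fun ⟨x, hx, _⟩ => hb x hx).symm

theorem eq_of_reflTransGen_of_minimal (hr : Relator.LeftUnique r) (ha : ∀ x, ¬ r x a)
    (hb : ∀ x, ¬ r x b) (hac : ReflTransGen r a c) (hbc : ReflTransGen r b c) : a = b :=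
  eq_of_reflTransGen_of_maximal (r := Function.swap r) (fun _ _ _ hxy hxz => hr hxy hxz) ha hb
    hac.swap hbc.swap

theorem transGen_self_of_reflTransGen (hr : Relator.LeftUnique r) (hab : ReflTransGen r a b)
    (hb : TransGen r b b) : TransGen r a a := by
  induction hab using ReflTransGen.head_induction_on with
  | refl => exact hb
  | head hac _ ih =>
    obtain ⟨d, hcd, hdc⟩ := TransGen.tail'_iff.1 ih
    exact TransGen.head' hac (hr hdc hac ▸ hcd)

end Relation

namespace Struct

variable {S : Struct} {T T' : SState S} {q : S.Edge × Formula.Addr} {n n' : S.Node}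
  {v v' w w' : S.PosVal} {e : S.Edge} {m : Formula.Addr}

/-- A token can get from the position `v` to the position `w`, synchronization and activity of the
links being disregarded. -/
def Reach : S.PosVal → S.PosVal → Prop :=
  Relation.ReflTransGen fun v w => ∃ n, S.Flow n v w

theorem WF.leftUnique_flow (h : S.WF) : Relator.LeftUnique fun v w => ∃ n, S.Flow n v w :=
  fun _ _ _ ⟨_, hv⟩ ⟨_, hw⟩ => h.flow_left_unique hv hw

theorem WF.rightUnique_flow (h : S.WF) : Relator.RightUnique fun v w => ∃ n, S.Flow n v w :=
  fun _ _ _ ⟨_, hv⟩ ⟨_, hw⟩ => h.flow_right_unique hv hw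

theorem WF.eq_origin_of_reach (h : S.WF) (hq : S.InitPos q ∨ S.OnePos q)
    (hv : Reach v (.atom q.1 q.2)) : v = .atom q.1 q.2 :=
  (hv.cases_tail.resolve_right fun ⟨_, _, _, hflow⟩ => h.not_flow_to_origin hq hflow).symm

theorem WF.origin_unique {q' : S.Edge × Formula.Addr} (h : S.WF)
    (hq : S.InitPos q ∨ S.OnePos q) (hq' : S.InitPos q' ∨ S.OnePos q')
    (hv : Reach (.atom q.1 q.2) v) (hv' : Reach (.atom q'.1 q'.2) v) : q = q' := by
  have heq := eq_of_reflTransGen_of_minimal h.leftUnique_flow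
    (fun _ ⟨_, hflow⟩ => h.not_flow_to_origin hq hflow)
    (fun _ ⟨_, hflow⟩ => h.not_flow_to_origin hq' hflow) hv hv'
  simpa [Prod.ext_iff] using heq

theorem WF.reach_or_eq_of_flow (h : S.WF) (hvw : Reach v w) (hflow : S.Flow n w' w) :
    v = w ∨ Reach v w' := by
  rcases hvw.cases_tail with rfl | ⟨u, hvu, _, hu⟩
  · exact Or.inl rfl
  · exact Or.inr (h.flow_left_unique hu hflow ▸ hvu)

theorem WF.dead_end_unique (h : S.WF) (hv : Reach v w) (hv' : Reach v w')
    (hw : ∀ n u, ¬ S.Flow n w u) (hw' : ∀ n u, ¬ S.Flow n w' u) : w = w' :=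
  eq_of_reflTransGen_of_maximal h.rightUnique_flow (fun u ⟨n, hu⟩ => hw n u hu)
    (fun u ⟨n, hu⟩ => hw' n u hu) hv hv'

/-- The positions a token can take: its position on a lock always has index `0`. -/
def positions (S : Struct) : Set S.PosVal :=
  (⋃ e, .atom e '' {m | (S.typ e).AtomOcc m}) ∪
    (.lock · 0) '' {e | S.sort (S.src e) = .bot}

theorem finite_positions (S : Struct) : S.positions.Finite :=
  (Set.finite_iUnion fun e => (S.typ e).finite_setOf_atomOcc.image _).union (Set.toFinite _)

theorem WF.origin_mem_positions (h : S.WF) (hq : S.InitPos q ∨ S.OnePos q) :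
    .atom q.1 q.2 ∈ S.positions := by
  refine Or.inl (Set.mem_iUnion.2 ⟨q.1, q.2, ?_, rfl⟩)
  rcases hq with ⟨-, hneg⟩ | ⟨hone, hroot⟩
  · exact hneg.atomOcc
  · exact ⟨.one, by rw [h.typ_of_one hone, hroot]; rfl, trivial⟩

theorem WF.mem_positions_of_flow (h : S.WF) (hflow : S.Flow n v w) : w ∈ S.positions := by
  have hvalid := h.validVal_of_flow hflow
  cases w with
  | atom e m => exact Or.inl (Set.mem_iUnion.2 ⟨e, m, hvalid, rfl⟩)
  | lock e i => cases hflow; exact Or.inr ⟨e, hvalid, rfl⟩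

end Struct

/-- The positions visited so far by the tokens of `T`: those between the origin of a token and its
current position. -/
def SState.past {S : Struct} (T : SState S) : Set S.PosVal :=
  {v | ∃ q w, T.f q = some w ∧ Struct.Reach (.atom q.1 q.2) v ∧ Struct.Reach v w}

namespace SState

open Struct

variable {S : Struct} {T : SState S} {q : S.Edge × Formula.Addr} {n : S.Node} {v w : S.PosVal}
  {e : S.Edge}

theorem isOrigin (hq : T.f q = some w) : S.InitPos q ∨ S.OnePos q :=
  T.dom_subset q (by simp [hq])

theorem mem_past_of_flow (h : S.WF) (hflow : S.Flow n v w) (hw : w ∈ T.past) : v ∈ T.past := by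
  obtain ⟨q, w', hq, hqw, hww'⟩ := hw
  rcases h.reach_or_eq_of_flow hqw hflow with rfl | hqv
  · exact (h.not_flow_to_origin (isOrigin hq) hflow).elim
  · exact ⟨q, w', hq, hqv, .head ⟨n, hflow⟩ hww'⟩

theorem exists_token_or_mem_past (h : S.WF) (hflow : S.Flow n v w) (hv : v ∈ T.past) :
    (∃ q, T.f q = some v) ∨ w ∈ T.past := by
  obtain ⟨q, w', hq, hqv, hvw'⟩ := hv
  rcases hvw'.cases_head with rfl | ⟨u, ⟨n', hvu⟩, huw'⟩
  · exact Or.inl ⟨q, hq⟩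
  · obtain rfl := h.flow_right_unique hflow hvu
    exact Or.inr ⟨q, w', hq, hqv.tail ⟨n, hflow⟩, huw'⟩

theorem exists_token_of_dead_end (hv : v ∈ T.past) (hdead : ∀ n w, ¬ S.Flow n v w) :
    ∃ q, T.f q = some v := by
  obtain ⟨q, w, hq, -, hvw⟩ := hv
  rcases hvw.cases_head with rfl | ⟨u, ⟨n, hvu⟩, -⟩
  · exact ⟨q, hq⟩
  · exact (hdead n u hvu).elim

theorem ne_none_of_mem_past (h : S.WF) (hq : S.InitPos q ∨ S.OnePos q)
    (hmem : .atom q.1 q.2 ∈ T.past) : T.f q ≠ none := by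
  obtain ⟨q', w, hq', hreach, -⟩ := hmem
  rw [h.origin_unique hq (isOrigin hq') .refl hreach, hq']
  simp

theorem past_subset_positions (h : S.WF) : T.past ⊆ S.positions := by
  rintro v ⟨q, w, hq, hqv, -⟩
  rcases hqv.cases_tail with rfl | ⟨u, -, n, huv⟩
  · exact h.origin_mem_positions (isOrigin hq)
  · exact h.mem_positions_of_flow huv

end SState

/-! ### Transitions -/

namespace Struct

variable {S : Struct} {T T' : SState S} {q : S.Edge × Formula.Addr} {k n : S.Node}
  {v v' w w' : S.PosVal} {e : S.Edge} {m : Formula.Addr}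

/-- Between the states `T` and `T'`, the token of origin `q` is created or crosses the link `n`. -/
def Moves (n : S.Node) (T T' : SState S) (q : S.Edge × Formula.Addr) : Prop :=
  (S.OnePos q ∧ T.f q = none ∧ T'.f q = some (.atom q.1 q.2)) ∨
    ∃ v w, S.Flow n v w ∧ T.f q = some v ∧ T'.f q = some w

/-- What the invariants of the machine retain of a transition at the link `n`. -/
structure StepAt (n : S.Node) (T T' : SState S) : Prop where
  active : S.Active T n
  exists_moves : ∃ q, Moves n T T' q
  moves_or_eq : ∀ q, Moves n T T' q ∨ T'.f q = T.f q
  saturated : S.sort n = .sync → ∀ {v w}, S.Flow n v w → ∃ q, T'.f q = some w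

theorem StepAt.of_moves (hact : S.Active T n) (hsort : S.sort n ≠ .sync) (hq : Moves n T T' q)
    (hothers : ∀ q', q' ≠ q → T'.f q' = T.f q') : StepAt n T T' where
  active := hact
  exists_moves := ⟨q, hq⟩
  moves_or_eq q' := by
    by_cases heq : q' = q
    · exact Or.inl (heq ▸ hq)
    · exact Or.inr (hothers q' heq)
  saturated hn := (hsort hn).elim

theorem WF.enters_sync_iff (h : S.WF) (hn : S.sort n = .sync) (hm : (S.typ e).AtomOcc m) :
    Enters n e m ↔
      (S.tgt e = some n ∧ (S.typ e).Positive) ∨ (S.src e = n ∧ (S.typ e).Negative) := by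
  constructor
  · rintro (⟨he, hpos⟩ | ⟨he, hneg⟩)
    · exact Or.inl ⟨he, (h.polarized_of_sync_premiss hn he).positive hpos⟩
    · exact Or.inr ⟨he, (h.polarized_of_sync_conclusion hn he).negative hneg⟩
  · rintro (⟨he, hpos⟩ | ⟨he, hneg⟩)
    · exact Or.inl ⟨he, hpos.posOcc hm⟩
    · exact Or.inr ⟨he, hneg.negOcc hm⟩

theorem WF.flow_sync_cases (h : S.WF) (hn : S.sort n = .sync) (hflow : S.Flow n (.atom e m) w) :
    (S.tgt e = some n ∧ (S.typ e).Positive ∧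
      ∀ {f}, S.src f = n → S.cIdx f = S.pIdx e → w = .atom f m) ∨
    (S.src e = n ∧ (S.typ e).Negative ∧
      ∀ {f}, S.tgt f = some n → S.pIdx f = S.cIdx e → w = .atom f m) := by
  cases hflow with
  | syncDown _ he hf hidx hm =>
    exact .inl ⟨he, (h.polarized_of_sync_premiss hn he).positive hm, fun hf' hidx' => by
      rw [h.sync_conclusion_unique hn he hf hidx hf' hidx']⟩
  | syncUp _ he hf hidx hm =>
    exact .inr ⟨hf, (h.polarized_of_sync_conclusion hn hf).negative hm, fun he' hidx' => by
      rw [h.sync_premiss_unique hn hf he hidx he' hidx'.symm]⟩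
  | _ => grind

theorem WF.stepAt_of_sync (h : S.WF) (hact : S.Active T n)
    (henter : ∃ q e m, T.f q = some (.atom e m) ∧ Enters n e m)
    (hfull : ∀ {e m}, Enters n e m → ∃ q, T.f q = some (.atom e m))
    (hcross : ∀ {q v w}, T.f q = some v → S.Flow n v w → T'.f q = some w)
    (hothers : ∀ q, (∀ e m, T.f q = some (.atom e m) → ¬ Enters n e m) → T'.f q = T.f q) :
    StepAt n T T' := by
  have moves_of_enters {q e m} (hq : T.f q = some (.atom e m)) (he : Enters n e m) :
      Moves n T T' q := by
    obtain ⟨w, hflow⟩ := h.exists_flow he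
    exact Or.inr ⟨_, w, hflow, hq, hcross hq hflow⟩
  refine ⟨hact, ?_, fun q => ?_, fun _ v w hflow => ?_⟩
  · obtain ⟨q, e, m, hq, he⟩ := henter
    exact ⟨q, moves_of_enters hq he⟩
  · by_cases hq : ∃ e m, T.f q = some (.atom e m) ∧ Enters n e m
    · obtain ⟨e, m, hq, he⟩ := hq
      exact Or.inl (moves_of_enters hq he)
    · exact Or.inr (hothers q fun e m hqe he => hq ⟨e, m, hqe, he⟩)
  · obtain ⟨e, m, rfl, he⟩ := h.enters_of_flow hflow
    obtain ⟨q, hq⟩ := hfull he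
    exact ⟨q, hcross hq hflow⟩

theorem WF.stepAt_of_trans (h : S.WF) (hstep : STrans S T T') : ∃ n, StepAt n T T' := by
  cases hstep with
  | axUp hq hm he hn hact he' hne hothers hq' =>
    exact ⟨_, .of_moves hact (by simp [hn])
      (.inr ⟨_, _, .ax hn he he' hne hm, hq, hq'⟩) hothers⟩
  | cutDown hq hm he hn hact he' hne hothers hq' =>
    exact ⟨_, .of_moves hact (by simp [hn])
      (.inr ⟨_, _, .cut hn he he' hne hm, hq, hq'⟩) hothers⟩
  | multDown hq hm he hn hact hg hidx hothers hq' =>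
    exact ⟨_, .of_moves hact (by aesop)
      (.inr ⟨_, _, .multDown hn he hg hidx hm, hq, hq'⟩) hothers⟩
  | multUp hq hm hg hn hact he hidx hothers hq' =>
    exact ⟨_, .of_moves hact (by aesop)
      (.inr ⟨_, _, .multUp hn he hg hidx hm, hq, hq'⟩) hothers⟩
  | lockTok hq _ he hn hact hothers hq' =>
    exact ⟨_, .of_moves hact (by simp [hn])
      (.inr ⟨_, _, .lock hn he, hq, hq'⟩) hothers⟩
  | oneSpawn hn hact he hnone hothers hq' =>
    exact ⟨_, .of_moves hact (by simp [hn]) (.inl ⟨⟨he ▸ hn, rfl⟩, hnone, hq'⟩) hothers⟩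
  | syncCross hn hact henter hfull hdown hup hothers =>
    have enters_iff {q e m} (hq : T.f q = some (.atom e m)) :=
      h.enters_sync_iff hn (T.val_valid q _ hq)
    refine ⟨_, h.stepAt_of_sync hact ?_ ?_ ?_ ?_⟩
    · obtain ⟨q, e, m, hq, he⟩ := henter
      exact ⟨q, e, m, hq, (enters_iff hq).2 he⟩
    · intro e m he
      have hm : (S.typ e).AtomOcc m := he.elim (·.2.atomOcc) (·.2.atomOcc)
      exact hfull e ((h.enters_sync_iff hn hm).1 he) m hm
    · intro q v w hq hflow
      obtain ⟨e, m, rfl, -⟩ := h.enters_of_flow hflow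
      rcases h.flow_sync_cases hn hflow with ⟨he, hpos, hw⟩ | ⟨he, hneg, hw⟩
      · obtain ⟨f, hf, hidx, hq'⟩ := hdown q e m hq he hpos
        rwa [hw hf hidx]
      · obtain ⟨f, hf, hidx, hq'⟩ := hup q e m hq he hneg
        rwa [hw hf hidx]
    · intro q hq
      exact hothers q fun e m hqe =>
        not_or.1 fun he => hq e m hqe ((enters_iff hqe).2 he)

theorem exists_state (T : SState S) (g : S.Edge × Formula.Addr → Option S.PosVal)
    (hg : ∀ q, g q = T.f q ∨
      (S.InitPos q ∨ S.OnePos q) ∧ ∃ w, g q = some w ∧ S.ValidVal w) :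
    ∃ T' : SState S, T'.f = g := by
  refine ⟨⟨g, fun q hq => ?_, fun q hq => ?_, fun q w hw => ?_⟩, rfl⟩
  · rcases hg q with heq | ⟨horigin, -⟩
    · exact T.dom_subset q (heq ▸ hq)
    · exact horigin
  · rcases hg q with heq | ⟨-, w, hw, -⟩
    · exact heq ▸ T.init_total q hq
    · simp [hw]
  · rcases hg q with heq | ⟨-, w', hw', hvalid⟩
    · exact T.val_valid q w (heq ▸ hw)
    · exact Option.some.inj (hw'.symm.trans hw) ▸ hvalid

theorem exists_update (T : SState S) (hq : S.InitPos q ∨ S.OnePos q) (hw : S.ValidVal w) :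
    ∃ T' : SState S, (∀ q', q' ≠ q → T'.f q' = T.f q') ∧ T'.f q = some w := by
  obtain ⟨T', hT'⟩ := exists_state T (Function.update T.f q (some w)) fun q' => by
    by_cases heq : q' = q
    · subst heq
      exact Or.inr ⟨hq, w, Function.update_self .., hw⟩
    · exact Or.inl (Function.update_of_ne heq ..)
  exact ⟨T', fun q' hne => by rw [hT', Function.update_of_ne hne], by
    rw [hT', Function.update_self]⟩

theorem WF.exists_trans_of_flow (h : S.WF) (hact : S.Active T n) (hn : S.sort n ≠ .sync)
    (hflow : S.Flow n v w) (hq : T.f q = some v) : ∃ T', STrans S T T' := by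
  obtain ⟨T', hothers, hq'⟩ :=
    exists_update T (SState.isOrigin hq) (h.validVal_of_flow hflow)
  refine ⟨T', ?_⟩
  cases hflow with
  | ax hn he he' hne hm => exact .axUp hq hm he hn hact he' hne hothers hq'
  | cut hn he he' hne hm => exact .cutDown hq hm he hn hact he' hne hothers hq'
  | multDown hn he hg hidx hm => exact .multDown hq hm he hn hact hg hidx hothers hq'
  | multUp hn he hg hidx hm => exact .multUp hq hm hg hn hact he hidx hothers hq'
  | lock hn he => exact .lockTok hq (h.typ_of_bot (he ▸ hn)) he hn hact hothers hq'
  | syncDown hsync => exact (hn hsync).elim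
  | syncUp hsync => exact (hn hsync).elim

theorem WF.exists_trans_of_one (h : S.WF) (hone : S.sort (S.src e) = .one)
    (hact : S.Active T (S.src e)) (he : T.f (e, []) = none) : ∃ T', STrans S T T' := by
  have hvalid : (S.typ e).AtomOcc [] := ⟨.one, by rw [h.typ_of_one hone]; rfl, trivial⟩
  obtain ⟨T', hothers, he'⟩ :=
    exists_update T (q := (e, [])) (w := .atom e []) (.inr ⟨hone, rfl⟩) hvalid
  exact ⟨T', .oneSpawn hone hact rfl he hothers he'⟩

theorem WF.exists_sync_advance (h : S.WF) (T : SState S) (n : S.Node) :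
    ∃ T' : SState S, (∀ {q v w}, T.f q = some v → S.Flow n v w → T'.f q = some w) ∧
      ∀ q, (∀ v w, T.f q = some v → ¬ S.Flow n v w) → T'.f q = T.f q := by
  have hchoice (q) : ∃ x, (∀ v w, T.f q = some v → S.Flow n v w → x = some w) ∧
      ((∀ v w, T.f q = some v → ¬ S.Flow n v w) → x = T.f q) := by
    by_cases hq : ∃ v w, T.f q = some v ∧ S.Flow n v w
    · obtain ⟨v, w, hv, hflow⟩ := hq
      refine ⟨some w, fun v' w' hv' hflow' => ?_, fun hno => (hno v w hv hflow).elim⟩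
      obtain rfl : v = v' := Option.some.inj (hv.symm.trans hv')
      rw [h.flow_right_unique hflow hflow']
    · exact ⟨T.f q, fun v w hv hflow => (hq ⟨v, w, hv, hflow⟩).elim, fun _ => rfl⟩
  choose g hmove hstay using hchoice
  obtain ⟨T', rfl⟩ := exists_state T g fun q => by
    by_cases hq : ∃ v w, T.f q = some v ∧ S.Flow n v w
    · obtain ⟨v, w, hv, hflow⟩ := hq
      exact .inr ⟨SState.isOrigin hv, w, hmove q v w hv hflow, h.validVal_of_flow hflow⟩
    · exact .inl (hstay q fun v w hv hflow => hq ⟨v, w, hv, hflow⟩)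
  exact ⟨T', hmove _ _ _, hstay⟩

theorem WF.exists_trans_of_sync (h : S.WF) (hact : S.Active T n) (hn : S.sort n = .sync)
    (hflow : S.Flow n v w) (hfull : ∀ v w, S.Flow n v w → ∃ q, T.f q = some v) :
    ∃ T', STrans S T T' := by
  obtain ⟨T', hmove, hstay⟩ := h.exists_sync_advance T n
  have enters_iff {q e m} (hq : T.f q = some (.atom e m)) :=
    h.enters_sync_iff hn (T.val_valid q _ hq)
  refine ⟨T', .syncCross hn hact ?_ ?_ ?_ ?_ ?_⟩
  · obtain ⟨e, m, rfl, he⟩ := h.enters_of_flow hflow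
    obtain ⟨q, hq⟩ := hfull _ _ hflow
    exact ⟨q, e, m, hq, (enters_iff hq).1 he⟩
  · intro e he m hm
    obtain ⟨w, hflow⟩ := h.exists_flow ((h.enters_sync_iff hn hm).2 he)
    exact hfull _ w hflow
  · intro q e m hq he hpos
    obtain ⟨f, ⟨hf, hidx⟩, -⟩ := h.existsUnique_sync_conclusion hn he
    exact ⟨f, hf, hidx, hmove hq (.syncDown hn he hf hidx (hpos.posOcc (T.val_valid q _ hq)))⟩
  · intro q e m hq he hneg
    obtain ⟨f, ⟨hf, hidx⟩, -⟩ := h.existsUnique_sync_premiss hn he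
    exact ⟨f, hf, hidx,
      hmove hq (.syncUp hn hf he hidx.symm (hneg.negOcc (T.val_valid q _ hq)))⟩
  · refine fun q hq => hstay q fun v w hv hflow => ?_
    obtain ⟨e, m, rfl, he⟩ := h.enters_of_flow hflow
    exact ((enters_iff hv).1 he).elim (hq e m hv).1 (hq e m hv).2

end Struct

/-! ### Reachable states -/

namespace Struct

/-- The invariant of the machine: tokens follow the flow, the links they have crossed are active,
and sync links have been crossed by all their tokens or by none. -/
structure Traced {S : Struct} (T : SState S) : Prop where
  reach : ∀ {q w}, T.f q = some w → Reach (.atom q.1 q.2) w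
  active : ∀ {n v w}, S.Flow n v w → w ∈ T.past → S.Active T n
  mem_past_of_sync : ∀ {n v v' w w'}, S.sort n = .sync → S.Flow n v w → w ∈ T.past →
    S.Flow n v' w' → w' ∈ T.past

variable {S : Struct} {T T' : SState S} {q : S.Edge × Formula.Addr} {k n b : S.Node}
  {v v' w w' : S.PosVal} {e : S.Edge} {m : Formula.Addr}

theorem Traced.mem_past (hT : Traced T) (hq : T.f q = some w) : w ∈ T.past :=
  ⟨q, w, hq, hT.reach hq, .refl⟩

theorem Traced.origin_mem_past (hT : Traced T) (hq : T.f q ≠ none) :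
    .atom q.1 q.2 ∈ T.past := by
  obtain ⟨w, hw⟩ := Option.ne_none_iff_exists'.1 hq
  exact ⟨q, w, hw, .refl, hT.reach hw⟩

theorem WF.notMem_past_of_flow (h : S.WF) (hT : Traced T) (hq : T.f q = some v)
    (hflow : S.Flow n v w) : w ∉ T.past := by
  rintro ⟨q', w', hq', hreach, hww'⟩
  have horigin := SState.isOrigin hq
  obtain rfl : q = q' := h.origin_unique horigin (SState.isOrigin hq')
    ((hT.reach hq).tail ⟨n, hflow⟩) hreach
  obtain rfl : v = w' := Option.some.inj (hq.symm.trans hq')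
  have hcycle := transGen_self_of_reflTransGen h.leftUnique_flow (hT.reach hq)
    (.head' ⟨n, hflow⟩ hww')
  obtain ⟨u, -, k, hu⟩ := Relation.TransGen.tail'_iff.1 hcycle
  exact h.not_flow_to_origin horigin hu

theorem StepAt.past_subset (hstep : StepAt n T T') : T.past ⊆ T'.past := by
  rintro v ⟨q, w, hq, hqv, hvw⟩
  rcases hstep.moves_or_eq q with (⟨-, hnone, -⟩ | ⟨w₀, w', hflow, hq₀, hq'⟩) | heq
  · simp [hq] at hnone
  · obtain rfl : w = w₀ := Option.some.inj (hq.symm.trans hq₀)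
    exact ⟨q, w', hq', hqv, hvw.tail ⟨n, hflow⟩⟩
  · exact ⟨q, w, heq.trans hq, hqv, hvw⟩

theorem StepAt.active_mono (hstep : StepAt n T T') (hact : S.Active T k) :
    S.Active T' k := by
  intro b hb
  obtain ⟨q, e, i, hq, he⟩ := hact b hb
  rcases hstep.moves_or_eq q with (⟨-, hnone, -⟩ | ⟨v, w, hflow, hqv, -⟩) | heq
  · simp [hq] at hnone
  · obtain rfl : .lock e i = v := Option.some.inj (hq.symm.trans hqv)
    nomatch hflow
  · exact ⟨q, e, i, heq.trans hq, he⟩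

theorem StepAt.mem_past_or_crossed (h : S.WF) (hstep : StepAt n T T') (hflow : S.Flow k v w)
    (hw : w ∈ T'.past) : w ∈ T.past ∨ k = n := by
  obtain ⟨q, w', hq', hqw, hww'⟩ := hw
  rcases hstep.moves_or_eq q with (⟨hone, -, hspawn⟩ | ⟨v₀, w₀, hflow₀, hq, hq₀⟩) | heq
  · obtain rfl : w' = _ := Option.some.inj (hq'.symm.trans hspawn)
    obtain rfl := h.eq_origin_of_reach (.inr hone) hww'
    exact (h.not_flow_to_origin (.inr hone) hflow).elim
  · obtain rfl : w' = w₀ := Option.some.inj (hq'.symm.trans hq₀)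
    rcases h.reach_or_eq_of_flow hww' hflow₀ with rfl | hwv₀
    · obtain rfl := h.flow_left_unique hflow hflow₀
      exact Or.inr (h.flow_node_eq_of_left hflow hflow₀)
    · exact Or.inl ⟨q, v₀, hq, hqw, hwv₀⟩
  · exact Or.inl ⟨q, w', heq ▸ hq', hqw, hww'⟩

theorem traced_initState (h : S.WF) : Traced (initState S) := by
  have eq_origin {q w} (hq : (initState S).f q = some w) : w = .atom q.1 q.2 := by
    simp only [initState, Option.ite_none_right_eq_some, Option.some.injEq] at hq
    exact hq.2.symm
  have not_flow_to_past {n v w} (hflow : S.Flow n v w) : w ∉ (initState S).past := by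
    rintro ⟨q, w', hq, -, hww'⟩
    obtain rfl := eq_origin hq
    obtain rfl := h.eq_origin_of_reach (SState.isOrigin hq) hww'
    exact h.not_flow_to_origin (SState.isOrigin hq) hflow
  exact {
    reach := fun hq => eq_origin hq ▸ .refl
    active := fun hflow hw => (not_flow_to_past hflow hw).elim
    mem_past_of_sync := fun _ hflow hw => (not_flow_to_past hflow hw).elim }

theorem StepAt.traced (h : S.WF) (hstep : StepAt n T T') (hT : Traced T) : Traced T' := by
  have reach {q w} (hq : T'.f q = some w) : Reach (.atom q.1 q.2) w := by
    rcases hstep.moves_or_eq q with (⟨-, -, hq'⟩ | ⟨v, w', hflow, hqv, hq'⟩) | heq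
    · obtain rfl : w = _ := Option.some.inj (hq.symm.trans hq')
      exact .refl
    · obtain rfl : w = w' := Option.some.inj (hq.symm.trans hq')
      exact (hT.reach hqv).tail ⟨n, hflow⟩
    · exact hT.reach (heq ▸ hq)
  refine ⟨reach, fun hflow hw => ?_, fun hk hflow hw hflow' => ?_⟩
  · rcases hstep.mem_past_or_crossed h hflow hw with hw | rfl
    · exact hstep.active_mono (hT.active hflow hw)
    · exact hstep.active_mono hstep.active
  · rcases hstep.mem_past_or_crossed h hflow hw with hw | rfl
    · exact hstep.past_subset (hT.mem_past_of_sync hk hflow hw hflow')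
    · obtain ⟨q, hq⟩ := hstep.saturated hk hflow'
      exact ⟨q, _, hq, reach hq, .refl⟩

theorem WF.traced_of_trans (h : S.WF) (hstep : STrans S T T') (hT : Traced T) : Traced T' :=
  let ⟨_, hstep⟩ := h.stepAt_of_trans hstep
  hstep.traced h hT

theorem WF.past_ssubset_of_trans (h : S.WF) (hstep : STrans S T T') (hT : Traced T) :
    T.past ⊂ T'.past := by
  have hT' := h.traced_of_trans hstep hT
  obtain ⟨n, hstep⟩ := h.stepAt_of_trans hstep
  obtain ⟨q, ⟨hone, hnone, hq'⟩ | ⟨v, w, hflow, hq, hq'⟩⟩ := hstep.exists_moves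
  · exact hstep.past_subset.ssubset_of_mem_notMem (hT'.mem_past hq') fun hmem =>
      SState.ne_none_of_mem_past h (.inr hone) hmem hnone
  · exact hstep.past_subset.ssubset_of_mem_notMem (hT'.mem_past hq')
      (h.notMem_past_of_flow hT hq hflow)

theorem WF.traced_of_reachable (h : S.WF)
    (hT : Relation.ReflTransGen (STrans S) (initState S) T) : Traced T := by
  induction hT with
  | refl => exact traced_initState h
  | tail _ hstep ih => exact h.traced_of_trans hstep ih

theorem WF.not_forall_trans (h : S.WF) {g : ℕ → SState S} (hg : Traced (g 0)) :
    ¬ ∀ n, STrans S (g n) (g (n + 1)) := by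
  intro hstep
  have htraced (n) : Traced (g n) := by
    induction n with
    | zero => exact hg
    | succ n ih => exact h.traced_of_trans (hstep n) ih
  have hmono : StrictMono fun n => (g n).past :=
    strictMono_nat_of_lt_succ fun n => h.past_ssubset_of_trans (hstep n) (htraced n)
  exact Set.infinite_of_injective_forall_mem hmono.injective
    (fun n => SState.past_subset_positions h) S.finite_positions.powerset

/-! ### Maximal runs -/

theorem lock_mem_past (hlock : .lock e 0 ∈ T.past) : S.Unlocked T (S.src e) := by
  obtain ⟨q, hq⟩ := SState.exists_token_of_dead_end hlock fun _ _ hflow => nomatch hflow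
  exact ⟨q, e, 0, hq, rfl⟩

theorem WF.active_of_accessible (h : S.WF) (hn : Accessible T.pastᶜ n) : S.Active T n := by
  intro b hb
  have hbot := h.sort_eq_bot_of_mem_boxes hb
  obtain ⟨e, rfl⟩ := h.exists_lock hbot
  exact lock_mem_past (by_contra fun hlock => hn _ hb ⟨hbot, e, rfl, hlock⟩)

theorem WF.isStalled_compl_past (h : S.WF) (hT : Traced T) (hmax : ∀ T', ¬ STrans S T T') :
    IsStalled T.pastᶜ where
  mem_iff {n v w} hn hflow hsort := by
    refine not_congr ⟨fun hv => ?_, SState.mem_past_of_flow h hflow⟩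
    rcases SState.exists_token_or_mem_past h hflow hv with ⟨q, hq⟩ | hw
    · obtain ⟨T', hstep⟩ := h.exists_trans_of_flow (h.active_of_accessible hn) hsort hflow hq
      exact (hmax T' hstep).elim
    · exact hw
  exists_mem_of_sync {n v w} hn hflow hsort hw := by
    by_contra! hall
    have hfull (v' w') (hflow' : S.Flow n v' w') : ∃ q, T.f q = some v' := by
      have hv' : v' ∈ T.past := not_not.1 (hall v' w' hflow')
      exact (SState.exists_token_or_mem_past h hflow' hv').resolve_right fun hw' =>
        hw (hT.mem_past_of_sync hsort hflow' hw' hflow)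
    obtain ⟨T', hstep⟩ := h.exists_trans_of_sync (h.active_of_accessible hn) hsort hflow hfull
    exact hmax T' hstep
  notMem_of_one {e} he hone := by
    refine not_not.2 (hT.origin_mem_past (q := (e, [])) fun hnone => ?_)
    obtain ⟨T', hstep⟩ := h.exists_trans_of_one hone (h.active_of_accessible he) hnone
    exact hmax T' hstep
  notMem_of_concl {e m} he hneg :=
    not_not.2 (hT.origin_mem_past (T.init_total (e, m) ⟨he, hneg⟩))

theorem WF.positions_subset_past (h : S.WF) (hC : S.Correct) (hT : Traced T)
    (hmax : ∀ T', ¬ STrans S T T') : S.positions ⊆ T.past := by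
  have hstall := h.isStalled_compl_past hT hmax
  rintro v (hv | ⟨e, he, rfl⟩)
  · obtain ⟨e, m, hm, rfl⟩ := Set.mem_iUnion.1 hv
    exact not_not.1 (hstall.atom_notMem h hC hm)
  · exact not_not.1 fun hlock => hstall.not_locked h hC ⟨he, e, rfl, hlock⟩

theorem WF.not_flow_of_full (h : S.WF) (hT : Traced T) (hfull : S.positions ⊆ T.past)
    (hq : T.f q = some v) : ¬ S.Flow n v w := fun hflow =>
  h.notMem_past_of_flow hT hq hflow (hfull (h.mem_positions_of_flow hflow))

theorem WF.not_flow_of_finPos (h : S.WF) (hp : S.FinPos (e, m)) : ¬ S.Flow n (.atom e m) w := by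
  intro hflow
  obtain ⟨_, _, heq, hent⟩ := h.enters_of_flow hflow
  cases heq
  rcases hent with ⟨he, -⟩ | ⟨-, hneg⟩
  · exact Option.some_ne_none _ (he.symm.trans hp.1)
  · exact hp.2.not_negOcc hneg

theorem WF.finPos_of_dead_end (h : S.WF) (hm : (S.typ e).AtomOcc m)
    (hdead : ∀ n w, ¬ S.Flow n (.atom e m) w) : S.FinPos (e, m) := by
  have not_enters (n) (he : Enters n e m) : False :=
    let ⟨w, hflow⟩ := h.exists_flow he
    hdead n w hflow
  rcases Formula.atomOcc_iff.1 hm with hpos | hneg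
  · exact ⟨Option.eq_none_iff_forall_ne_some.2 fun n he => not_enters n (.inl ⟨he, hpos⟩), hpos⟩
  · exact (not_enters _ (.inr ⟨rfl, hneg⟩)).elim

theorem WF.final_of_full (h : S.WF) (hT : Traced T) (hfull : S.positions ⊆ T.past) : T.Final := by
  refine ⟨fun q v hq => ?_, fun e m hp => ?_⟩
  · cases v with
    | lock e i => exact Or.inr ⟨e, i, rfl⟩
    | atom e m =>
      exact Or.inl ⟨e, m, rfl, h.finPos_of_dead_end (T.val_valid q _ hq) fun _ _ =>
        h.not_flow_of_full hT hfull hq⟩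
  · have hmem : .atom e m ∈ S.positions := Or.inl (Set.mem_iUnion.2 ⟨e, m, hp.2.atomOcc, rfl⟩)
    exact SState.exists_token_of_dead_end (hfull hmem) fun _ _ => h.not_flow_of_finPos hp

theorem WF.token_iff_of_full (h : S.WF) (hT : Traced T) (hfull : S.positions ⊆ T.past) :
    T.f q = some v ↔
      (S.InitPos q ∨ S.OnePos q) ∧ Reach (.atom q.1 q.2) v ∧ ∀ n w, ¬ S.Flow n v w := by
  refine ⟨fun hq => ⟨SState.isOrigin hq, hT.reach hq, fun n w =>
    h.not_flow_of_full hT hfull hq⟩, fun ⟨horigin, hreach, hdead⟩ => ?_⟩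
  obtain ⟨w, hw⟩ := Option.ne_none_iff_exists'.1
    (SState.ne_none_of_mem_past h horigin (hfull (h.origin_mem_positions horigin)))
  rw [hw, h.dead_end_unique (hT.reach hw) hreach
    (fun _ _ => h.not_flow_of_full hT hfull hw) hdead]

theorem WF.eq_of_full (h : S.WF) (hT : Traced T) (hT' : Traced T') (hfull : S.positions ⊆ T.past)
    (hfull' : S.positions ⊆ T'.past) : T = T' := by
  have hf : T.f = T'.f := funext fun q => Option.ext fun v =>
    (h.token_iff_of_full hT hfull).trans (h.token_iff_of_full hT' hfull').symm
  cases T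
  cases T'
  congr

end Struct

/-- **Termination and Deadlock Freedom.**  Every run of the SIAM machine
`M_R` of an SMLL net `R` (maximal sequence of transitions from the initial
state `I_R`) terminates in a final state, and this final state is unique. -/
theorem siam_termination_deadlock_freedom (R : Struct) (hWF : R.WF)
    (hC : R.Correct) :
    (∀ g : ℕ → SState R, g 0 = initState R →
      ¬ ∀ n : ℕ, STrans R (g n) (g (n + 1))) ∧
    (∀ T : SState R, Relation.ReflTransGen (STrans R) (initState R) T →
      (∀ T', ¬ STrans R T T') → T.Final) ∧
    (∀ T₁ T₂ : SState R,
      Relation.ReflTransGen (STrans R) (initState R) T₁ →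
      Relation.ReflTransGen (STrans R) (initState R) T₂ →
      (∀ T', ¬ STrans R T₁ T') → (∀ T', ¬ STrans R T₂ T') → T₁ = T₂) := by
  refine ⟨fun g hg => ?_, fun T hT hmax => ?_, fun T₁ T₂ hT₁ hT₂ hmax₁ hmax₂ => ?_⟩
  · exact hWF.not_forall_trans (hg ▸ Struct.traced_initState hWF)
  · have htraced := hWF.traced_of_reachable hT
    exact hWF.final_of_full htraced (hWF.positions_subset_past hC htraced hmax)
  · have htraced₁ := hWF.traced_of_reachable hT₁
    have htraced₂ := hWF.traced_of_reachable hT₂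
    exact hWF.eq_of_full htraced₁ htraced₂ (hWF.positions_subset_past hC htraced₁ hmax₁)
      (hWF.positions_subset_past hC htraced₂ hmax₂)
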